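/- arXiv:2409.03323 — 2 statements merged into one kernel-verified Lean document; each statement's English description precedes it below -/
import Mathlib

section
/- Let n, r, k be integers with k ≥ 3, r > k, and r ≤ n ≤ 2r−2. Then every n-vertex connected BP_k-free r-uniform multi-hypergraph H satisfies e(H) ≤ k−1. -/
namespace BergeM

def MIsBergePath {n : ℕ} (E : Multiset (Finset (Fin n))) (k : ℕ)
    (v : Fin (k + 1) → Fin n) (f : Fin k → Finset (Fin n)) : Prop :=
  Function.Injective v ∧ (↑(List.ofFn f) : Multiset (Finset (Fin n))) ≤ E ∧
    ∀ i : Fin k, v i.castSucc ∈ f i ∧ v i.succ ∈ f i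

def MHasBergePath {n : ℕ} (E : Multiset (Finset (Fin n))) (k : ℕ) : Prop :=
  ∃ v f, MIsBergePath E k v f

def MBPFree {n : ℕ} (E : Multiset (Finset (Fin n))) (k : ℕ) : Prop :=
  ¬ MHasBergePath E k

def MConnected {n : ℕ} (E : Multiset (Finset (Fin n))) : Prop :=
  ∀ x y : Fin n, ∃ (k : ℕ) (v : Fin (k + 1) → Fin n) (f : Fin k → Finset (Fin n)),
    MIsBergePath E k v f ∧ (∃ i, v i = x) ∧ (∃ i, v i = y)

def MUniform {n : ℕ} (E : Multiset (Finset (Fin n))) (r : ℕ) : Prop :=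
  ∀ e ∈ E, e.card = r

def MIsBergeCycle {n : ℕ} (E : Multiset (Finset (Fin n))) (k : ℕ)
    (v : Fin k → Fin n) (f : Fin k → Finset (Fin n)) : Prop :=
  Function.Injective v ∧ (↑(List.ofFn f) : Multiset (Finset (Fin n))) ≤ E ∧
    ∀ i : Fin k, v i ∈ f i ∧ v ⟨(i.val + 1) % k, Nat.mod_lt _ i.pos⟩ ∈ f i

def MHasBergeCycle {n : ℕ} (E : Multiset (Finset (Fin n))) (k : ℕ) : Prop :=
  ∃ v f, MIsBergeCycle E k v f

def edgeNbhd {n : ℕ} (E : Multiset (Finset (Fin n))) (S : Finset (Fin n)) :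
    Multiset (Finset (Fin n)) :=
  E.filter fun e => (e ∩ S).Nonempty

/-!
Any `k ≤ r` members of `E`, counted with multiplicity, form a Berge cycle. Cutting it open at a
vertex of one of its hyperedges outside the cycle, which exists if `k < r`, gives a Berge path of
length `k`.

To build the cycle, let `I` be the vertex set of a Berge cycle of length `s < r` and `f` one more
hyperedge. Any two hyperedges share at least `2 * r - n ≥ 2` vertices, so if `f` misses `I`, it can
replace a vertex of the cycle. Otherwise take the hyperedges that follow on the cycle the
`t ≥ 1` vertices of `f ∩ I`. Together with `f` they cannot be pairwise disjoint outside `I`, for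
they would cover at least `(r - t) + t * (r - s) ≥ 2 * r - s - 1` vertices there, and only
`n - s ≤ 2 * r - s - 2` exist. A vertex outside `I` common to two of them makes room for `f`.
-/

/-- A Berge walk from `u` to `w`, encoded as the list of its steps `(v, c)`: leave the vertex `v`
through the hyperedge `c`. Only the departure vertices are listed, so a closed walk lists each
visit to a vertex once. -/
inductive IsBergeWalk {V : Type*} : V → List (V × Finset V) → V → Prop
  | nil (v : V) : IsBergeWalk v [] v
  | cons {u v w : V} {c : Finset V} {L : List (V × Finset V)} (hu : u ∈ c) (hv : v ∈ c)
      (h : IsBergeWalk v L w) : IsBergeWalk u ((u, c) :: L) w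

/-- A Berge cycle, encoded as a closed Berge walk with distinct vertices. Its hyperedges may be
equal as sets: their multiplicities are accounted for by the multiset `L.map Prod.snd`. A single
hyperedge `[(v, c)]` with `v ∈ c` counts as a cycle, from which longer ones are grown. -/
structure IsBergeCycle {V : Type*} (L : List (V × Finset V)) : Prop where
  exists_isBergeWalk : ∃ v, IsBergeWalk v L v
  nodup : (L.map Prod.fst).Nodup

/-- The members of the multiset `C`, with multiplicity, are the hyperedges of a Berge cycle. -/
def HasSpanningBergeCycle {V : Type*} (C : Multiset (Finset V)) : Prop :=
  ∃ L : List (V × Finset V), IsBergeCycle L ∧ (L.map Prod.snd : Multiset (Finset V)) = C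

section

variable {V : Type*} {L A B : List (V × Finset V)} {x y w : V} {c f : Finset V}

namespace IsBergeWalk

theorem append (hA : IsBergeWalk x A y) (hB : IsBergeWalk y B w) : IsBergeWalk x (A ++ B) w := by
  induction hA with
  | nil => exact hB
  | cons hu hv _ ih => exact .cons hu hv (ih hB)

theorem exists_of_append (h : IsBergeWalk x (A ++ B) w) :
    ∃ y, IsBergeWalk x A y ∧ IsBergeWalk y B w := by
  induction A generalizing x with
  | nil => exact ⟨x, .nil x, h⟩
  | cons p A ih =>
    obtain _ | ⟨hu, hv, h⟩ := h
    obtain ⟨y, hA, hB⟩ := ih h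
    exact ⟨y, .cons hu hv hA, hB⟩

theorem eq_of_cons (h : IsBergeWalk y ((x, c) :: L) w) : x = y := by
  cases h; rfl

theorem replace_start (h : IsBergeWalk x ((x, c) :: L) y) (hw : w ∈ c) :
    IsBergeWalk w ((w, c) :: L) y := by
  obtain _ | ⟨-, hv, h⟩ := h
  exact .cons hw hv h

theorem exists_reverse (h : IsBergeWalk x L y) :
    ∃ L', IsBergeWalk y L' x ∧ (L'.map Prod.snd).Perm (L.map Prod.snd) ∧
      (x :: L'.map Prod.fst).Perm (y :: L.map Prod.fst) := by
  induction h with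
  | nil v => exact ⟨[], .nil v, .refl _, .refl _⟩
  | @cons u v w c L hu hv _ ih =>
    obtain ⟨L', hL', hsnd, hfst⟩ := ih
    refine ⟨L' ++ [(v, c)], hL'.append (.cons hv hu (.nil u)), ?_, ?_⟩
    · simpa using (List.perm_append_singleton c _).trans (hsnd.cons c)
    · have hv' : (L'.map Prod.fst ++ [v]).Perm (w :: L.map Prod.fst) :=
        (List.perm_append_singleton v _).trans hfst
      simpa using (hv'.cons u).trans (.swap w u _)

theorem getElem_mem (h : IsBergeWalk x L y) {i : ℕ} (hi : i < L.length) :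
    (L.map Prod.fst ++ [y])[i]'(by simp; omega) ∈ L[i].2 ∧
      (L.map Prod.fst ++ [y])[i + 1]'(by simp; omega) ∈ L[i].2 := by
  induction h generalizing i with
  | nil => simp at hi
  | cons hu hv h ih =>
    cases i with
    | zero => cases h <;> exact ⟨hu, hv⟩
    | succ i => exact ih (by simpa using hi)

theorem mHasBergePath {n : ℕ} {x y : Fin n} {L : List (Fin n × Finset (Fin n))}
    {E : Multiset (Finset (Fin n))} (h : IsBergeWalk x L y) (hy : (y :: L.map Prod.fst).Nodup)
    (hE : (L.map Prod.snd : Multiset (Finset (Fin n))) ≤ E) : MHasBergePath E L.length := by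
  have hnodup : (L.map Prod.fst ++ [y]).Nodup :=
    (List.perm_append_singleton y _).nodup_iff.2 hy
  refine ⟨fun i => (L.map Prod.fst ++ [y])[i.val]'(by simp; omega), fun i => L[i].2, ?_, ?_,
    fun i => h.getElem_mem i.isLt⟩
  · exact fun i j hij => Fin.ext ((hnodup.getElem_inj_iff).1 hij)
  · rwa [show List.ofFn (fun i : Fin L.length => L[i].2) = L.map Prod.snd by
      simp [List.ofFn_getElem_eq_map]]

end IsBergeWalk

namespace IsBergeCycle

theorem rotate (h : IsBergeCycle (A ++ B)) : IsBergeCycle (B ++ A) := by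
  obtain ⟨v, hv⟩ := h.exists_isBergeWalk
  obtain ⟨y, hA, hB⟩ := hv.exists_of_append
  refine ⟨⟨y, hB.append hA⟩, ?_⟩
  simpa using List.nodup_append_comm.1 (by simpa using h.nodup)

theorem exists_cons_perm {p : V × Finset V} (h : IsBergeCycle L) (hp : p ∈ L) :
    ∃ L', IsBergeCycle (p :: L') ∧ (p :: L').Perm L := by
  obtain ⟨A, B, rfl⟩ := List.append_of_mem hp
  exact ⟨B ++ A, h.rotate, List.perm_append_comm (l₁ := p :: B)⟩

theorem isBergeWalk_cons (h : IsBergeCycle ((x, c) :: L)) : IsBergeWalk x ((x, c) :: L) x := by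
  obtain ⟨v, hv⟩ := h.exists_isBergeWalk
  obtain rfl := hv.eq_of_cons
  exact hv

theorem card_filter_fst_mem [DecidableEq V] (h : IsBergeCycle L) (f : Finset V) :
    (L.toFinset.filter fun p => p.1 ∈ f).card = (f ∩ (L.map Prod.fst).toFinset).card := by
  have hinj : Set.InjOn Prod.fst (L.toFinset.filter fun p => p.1 ∈ f : Set (V × Finset V)) :=
    fun p hp q hq => List.inj_on_of_nodup_map h.nodup
      (List.mem_toFinset.1 (Finset.mem_filter.1 hp).1)
      (List.mem_toFinset.1 (Finset.mem_filter.1 hq).1)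
  have hmap : (L.map Prod.fst).toFinset = L.toFinset.image Prod.fst := by ext; simp
  rw [hmap, Finset.inter_comm, ← Finset.filter_mem_eq_inter, Finset.filter_image,
    Finset.card_image_of_injOn hinj]

theorem hasSpanningBergeCycle_cons_of_mem (h : IsBergeCycle ((x, c) :: L)) (hxf : x ∈ f)
    (hw : w ∉ ((x, c) :: L).map Prod.fst) (hwf : w ∈ f) (hwc : w ∈ c) :
    HasSpanningBergeCycle (f ::ₘ (((x, c) :: L).map Prod.snd : Multiset (Finset V))) := by
  refine ⟨(x, f) :: (w, c) :: L,
    ⟨⟨x, .cons hxf hwf (h.isBergeWalk_cons.replace_start hwc)⟩, ?_⟩, rfl⟩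
  have hperm : (((x, f) :: (w, c) :: L).map Prod.fst).Perm (w :: ((x, c) :: L).map Prod.fst) :=
    .swap w x _
  exact hperm.nodup_iff.2 (h.nodup.cons hw)

/-- Crossing: the two arcs of the cycle between `x` and `y` are joined through `w` on one side, the
second of them traversed backwards, and through `f` on the other. -/
theorem hasSpanningBergeCycle_cons_of_cross {d : Finset V}
    (h : IsBergeCycle ((x, c) :: (A ++ (y, d) :: B))) (hxf : x ∈ f) (hyf : y ∈ f)
    (hw : w ∉ ((x, c) :: (A ++ (y, d) :: B)).map Prod.fst) (hwc : w ∈ c) (hwd : w ∈ d) :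
    HasSpanningBergeCycle
      (f ::ₘ (((x, c) :: (A ++ (y, d) :: B)).map Prod.snd : Multiset (Finset V))) := by
  obtain ⟨z, hA, hB⟩ := h.isBergeWalk_cons.exists_of_append (A := (x, c) :: A)
  obtain rfl := hB.eq_of_cons
  obtain ⟨R, hR, hRsnd, hfst⟩ := (hB.replace_start hwd).exists_reverse
  have hRfst : (R.map Prod.fst).Perm (x :: B.map Prod.fst) :=
    (hfst.trans (.swap w x _)).cons_inv
  rw [← Multiset.coe_eq_coe] at hRfst hRsnd
  refine ⟨(y, f) :: (R ++ (w, c) :: A),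
    ⟨⟨y, .cons hyf hxf (hR.append (hA.replace_start hwc))⟩, ?_⟩, ?_⟩
  · have hperm : (((y, f) :: (R ++ (w, c) :: A)).map Prod.fst).Perm
        (w :: ((x, c) :: (A ++ (y, d) :: B)).map Prod.fst) := by
      rw [← Multiset.coe_eq_coe]
      simp only [List.map_cons, List.map_append, ← Multiset.cons_coe, ← Multiset.coe_add, hRfst,
        ← Multiset.singleton_add]
      abel
    exact hperm.nodup_iff.2 (h.nodup.cons hw)
  · simp only [List.map_cons, List.map_append, ← Multiset.cons_coe, ← Multiset.coe_add, hRsnd,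
      ← Multiset.singleton_add]
    abel

/-- Here `f` takes the place of a vertex of the cycle, linked by two vertices of its own to the
hyperedges on either side. -/
theorem hasSpanningBergeCycle_cons_of_disjoint [DecidableEq V] (h : IsBergeCycle L) (hL : L ≠ [])
    (hf : ∀ v ∈ L.map Prod.fst, v ∉ f) (hcard : ∀ c ∈ L.map Prod.snd, 1 < (f ∩ c).card) :
    HasSpanningBergeCycle (f ::ₘ (L.map Prod.snd : Multiset (Finset V))) := by
  obtain _ | ⟨⟨x, c⟩, L⟩ := L
  · contradiction
  obtain ⟨y, hy⟩ : (f ∩ c).Nonempty := Finset.card_pos.1 (by have := hcard c (by simp); omega)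
  obtain ⟨hyf, hyc⟩ := Finset.mem_inter.1 hy
  obtain ⟨R, hR, hsnd, hfst⟩ := (h.isBergeWalk_cons.replace_start hyc).exists_reverse
  obtain _ | ⟨⟨x', d⟩, R⟩ := R
  · simp at hsnd
  obtain rfl := hR.eq_of_cons.symm
  obtain ⟨w, hw, hwy⟩ := Finset.exists_mem_ne (hcard d (hsnd.subset (by simp))) y
  obtain ⟨hwf, hwd⟩ := Finset.mem_inter.1 hw
  have hRfst : (R.map Prod.fst).Perm (L.map Prod.fst) :=
    (hfst.trans (.swap y x _)).cons_inv.cons_inv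
  refine ⟨(y, f) :: (w, d) :: R, ⟨⟨y, .cons hyf hwf (hR.replace_start hwd)⟩, ?_⟩,
    Multiset.coe_eq_coe.2 (hsnd.cons f)⟩
  have hLf : ∀ v ∈ f, v ∉ R.map Prod.fst := fun v hv hvR =>
    hf v (List.mem_cons_of_mem _ (hRfst.subset hvR)) hv
  exact ((hRfst.nodup_iff.2 h.nodup.of_cons).cons (hLf w hwf)).cons
    (List.not_mem_cons_of_ne_of_not_mem hwy.symm (hLf y hyf))

theorem mHasBergePath {n : ℕ} {L : List (Fin n × Finset (Fin n))}
    {E : Multiset (Finset (Fin n))} (h : IsBergeCycle L) (hL : L ≠ [])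
    (hcard : ∀ c ∈ L.map Prod.snd, L.length < c.card)
    (hE : (L.map Prod.snd : Multiset (Finset (Fin n))) ≤ E) : MHasBergePath E L.length := by
  obtain _ | ⟨⟨x, c⟩, L⟩ := L
  · contradiction
  obtain ⟨w, hwc, hw⟩ := Finset.exists_mem_notMem_of_card_lt_card
    (s := (((x, c) :: L).map Prod.fst).toFinset) (t := c)
    ((List.toFinset_card_le _).trans_lt (by simpa using hcard c (by simp)))
  have hperm : (x :: ((w, c) :: L).map Prod.fst).Perm (w :: ((x, c) :: L).map Prod.fst) :=
    .swap w x _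
  exact (h.isBergeWalk_cons.replace_start hwc).mHasBergePath
    (hperm.nodup_iff.2 (h.nodup.cons (by simpa using hw))) hE

end IsBergeCycle

end

section

variable {V : Type*} [Fintype V] {r : ℕ}

theorem one_lt_card_inter [DecidableEq V] {c d : Finset V} (hV : Fintype.card V + 2 ≤ 2 * r)
    (hc : r ≤ c.card) (hd : r ≤ d.card) : 1 < (c ∩ d).card := by
  have := Finset.card_union_add_card_inter c d
  have := Finset.card_le_univ (c ∪ d)
  omega

/-- Otherwise `f` and the sets `c t` would be pairwise disjoint outside `I`, where they have at
least `r - |T|` and `r - |I|` elements: more than fit into the complement of `I`. -/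
theorem exists_notMem_mem_mem_of_card_eq [DecidableEq V] {τ : Type*} {T : Finset τ}
    {c : τ → Finset V} {f I : Finset V} (hV : Fintype.card V + 2 ≤ 2 * r) (hI : I.card < r)
    (hf : r ≤ f.card) (hc : ∀ t ∈ T, r ≤ (c t).card) (hT : T.Nonempty)
    (hTf : T.card = (f ∩ I).card) :
    ∃ w ∉ I, (w ∈ f ∧ ∃ t ∈ T, w ∈ c t) ∨ ∃ t ∈ T, ∃ t' ∈ T, t ≠ t' ∧ w ∈ c t ∧ w ∈ c t' := by
  by_contra! hdisj
  have hcc : (T : Set τ).PairwiseDisjoint fun t => c t \ I := fun t ht t' ht' hne =>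
    Finset.disjoint_left.2 fun w hw hw' => by
      rw [Finset.mem_sdiff] at hw hw'
      exact (hdisj w hw.2).2 t ht t' ht' hne hw.1 hw'.1
  have hfc : Disjoint (f \ I) (T.biUnion fun t => c t \ I) := by
    refine (Finset.disjoint_biUnion_right _ _ _).2 fun t ht =>
      Finset.disjoint_left.2 fun w hw hw' => ?_
    rw [Finset.mem_sdiff] at hw hw'
    exact (hdisj w hw.2).1 hw.1 t ht hw'.1
  have hle : (f \ I).card + ∑ t ∈ T, (c t \ I).card ≤ Iᶜ.card := by
    rw [← Finset.card_biUnion hcc, ← Finset.card_union_of_disjoint hfc]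
    refine Finset.card_le_card (Finset.union_subset ?_ (Finset.biUnion_subset.2 fun t _ => ?_))
    all_goals exact fun w hw => Finset.mem_compl.2 (Finset.mem_sdiff.1 hw).2
  have hsum : T.card * (r - I.card) ≤ ∑ t ∈ T, (c t \ I).card := by
    refine Finset.card_nsmul_le_sum T _ _ fun t ht => ?_
    have := Finset.le_card_sdiff I (c t)
    have := hc t ht
    omega
  have hfI := Finset.card_sdiff_add_card_inter f I
  have hcompl := Finset.card_add_card_compl I
  obtain ⟨q, hq⟩ : ∃ q, r = I.card + q + 1 := ⟨r - I.card - 1, by omega⟩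
  have hTq : q ≤ T.card * q := Nat.le_mul_of_pos_left q hT.card_pos
  rw [show r - I.card = q + 1 by omega, mul_add_one] at hsum
  omega

theorem IsBergeCycle.hasSpanningBergeCycle_cons {L : List (V × Finset V)} {f : Finset V}
    (h : IsBergeCycle L) (hL : L ≠ []) (hV : Fintype.card V + 2 ≤ 2 * r) (hLr : L.length < r)
    (hf : r ≤ f.card) (hc : ∀ c ∈ L.map Prod.snd, r ≤ c.card) :
    HasSpanningBergeCycle (f ::ₘ (L.map Prod.snd : Multiset (Finset V))) := by
  classical
  set I := (L.map Prod.fst).toFinset with hI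
  set T := L.toFinset.filter fun p => p.1 ∈ f with hT
  have hmemT {p : V × Finset V} : p ∈ T ↔ p ∈ L ∧ p.1 ∈ f := by
    rw [hT, Finset.mem_filter, List.mem_toFinset]
  have hIr : I.card < r := (List.toFinset_card_le _).trans_lt (by rwa [List.length_map])
  obtain hT0 | hTne := T.eq_empty_or_nonempty
  · refine h.hasSpanningBergeCycle_cons_of_disjoint hL (fun v hv hvf => ?_)
      fun c hcL => one_lt_card_inter hV hf (hc c hcL)
    obtain ⟨p, hp, rfl⟩ := List.mem_map.1 hv
    exact Finset.notMem_empty p (hT0 ▸ hmemT.2 ⟨hp, hvf⟩)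
  obtain ⟨w, hwI, ⟨hwf, p, hp, hwp⟩ | ⟨p, hp, q, hq, hpq, hwp, hwq⟩⟩ :=
    exists_notMem_mem_mem_of_card_eq (c := Prod.snd) hV hIr hf
      (fun p hp => hc _ (List.mem_map_of_mem (hmemT.1 hp).1)) hTne
      (h.card_filter_fst_mem f)
  all_goals
    rw [hmemT] at hp
    obtain ⟨L', h', hperm⟩ := h.exists_cons_perm hp.1
    rw [hI, List.mem_toFinset, ← (hperm.map Prod.fst).mem_iff] at hwI
    rw [← Multiset.coe_eq_coe.2 (hperm.map Prod.snd)]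
  · exact h'.hasSpanningBergeCycle_cons_of_mem hp.2 hwI hwf hwp
  · rw [hmemT] at hq
    have hqL' : q ∈ L' := (List.mem_cons.1 (hperm.mem_iff.2 hq.1)).resolve_left hpq.symm
    obtain ⟨A, B, rfl⟩ := List.append_of_mem hqL'
    exact h'.hasSpanningBergeCycle_cons_of_cross hp.2 hq.2 hwI hwp hwq

theorem hasSpanningBergeCycle_of_card_le {C : Multiset (Finset V)}
    (hV : Fintype.card V + 2 ≤ 2 * r) (hC : ∀ c ∈ C, r ≤ c.card) (hC0 : C ≠ 0)
    (hCr : C.card ≤ r) : HasSpanningBergeCycle C := by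
  induction C using Multiset.induction with
  | empty => contradiction
  | cons f C ih =>
    rw [Multiset.forall_mem_cons] at hC
    rw [Multiset.card_cons] at hCr
    obtain rfl | hC' := eq_or_ne C 0
    · obtain ⟨v, hv⟩ := Finset.card_pos.1 (show 0 < f.card by omega)
      exact ⟨[(v, f)], ⟨⟨v, .cons hv hv (.nil v)⟩, List.nodup_singleton v⟩, rfl⟩
    obtain ⟨L, hL, rfl⟩ := ih hC.2 hC' (by omega)
    exact hL.hasSpanningBergeCycle_cons (by rintro rfl; simp at hC') hV (by simpa using hCr) hC.1
      hC.2

end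

theorem stmt8_general {n r k : ℕ} (hk : 0 < k) (hkr : k < r) (hn : n + 2 ≤ 2 * r)
    {E : Multiset (Finset (Fin n))} (hE : ∀ e ∈ E, r ≤ e.card) (hf : MBPFree E k) :
    Multiset.card E < k := by
  by_contra! hkE
  obtain ⟨C, hC⟩ : ∃ C, C ∈ E.powersetCard k :=
    Multiset.card_pos_iff_exists_mem.1 (E.card_powersetCard k ▸ Nat.choose_pos hkE)
  obtain ⟨hCE, rfl⟩ := Multiset.mem_powersetCard.1 hC
  obtain ⟨L, hL, rfl⟩ : HasSpanningBergeCycle C := hasSpanningBergeCycle_of_card_le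
    (by simpa using hn) (fun c hc => hE c (Multiset.mem_of_le hCE hc)) (Multiset.card_pos.1 hk)
    hkr.le
  simp only [Multiset.coe_card, List.length_map] at hk hkr hf
  exact hf (hL.mHasBergePath (List.length_pos_iff.1 hk)
    (fun c hc => hkr.trans_le (hE c (Multiset.mem_of_le hCE hc))) hCE)

theorem stmt8 (n r k : ℕ) (hk : 3 ≤ k) (hrk : k < r) (hn1 : r ≤ n) (hn2 : n ≤ 2 * r - 2)
    (E : Multiset (Finset (Fin n))) (hu : MUniform E r) (hc : MConnected E)
    (hf : MBPFree E k) : Multiset.card E ≤ k - 1 :=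
  Nat.le_sub_one_of_lt
    (stmt8_general (by omega) hrk (by omega) (fun e he => (hu e he).ge) hf)

end BergeM
end

section
/- For every integer r ≥ 3 there exists an integer N such that for all integers n ≥ N, ex^conn_r(n,BP_{r+1}) = n − r + 1. -/
namespace Berge

def IsBergePath {n : ℕ} (E : Finset (Finset (Fin n))) (k : ℕ)
    (v : Fin (k + 1) → Fin n) (f : Fin k → Finset (Fin n)) : Prop :=
  Function.Injective v ∧ Function.Injective f ∧ (∀ i, f i ∈ E) ∧
    ∀ i : Fin k, v i.castSucc ∈ f i ∧ v i.succ ∈ f i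

def HasBergePath {n : ℕ} (E : Finset (Finset (Fin n))) (k : ℕ) : Prop :=
  ∃ v f, IsBergePath E k v f

def BPFree {n : ℕ} (E : Finset (Finset (Fin n))) (k : ℕ) : Prop :=
  ¬ HasBergePath E k

def Connected {n : ℕ} (E : Finset (Finset (Fin n))) : Prop :=
  ∀ x y : Fin n, ∃ (k : ℕ) (v : Fin (k + 1) → Fin n) (f : Fin k → Finset (Fin n)),
    IsBergePath E k v f ∧ (∃ i, v i = x) ∧ (∃ i, v i = y)

def Uniform {n : ℕ} (E : Finset (Finset (Fin n))) (r : ℕ) : Prop :=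
  ∀ e ∈ E, e.card = r

noncomputable def exConn (n r k : ℕ) : ℕ :=
  sSup {m | ∃ E : Finset (Finset (Fin n)),
    Uniform E r ∧ Connected E ∧ BPFree E k ∧ E.card = m}

def IsBergeCycle {n : ℕ} (E : Finset (Finset (Fin n))) (k : ℕ)
    (v : Fin k → Fin n) (f : Fin k → Finset (Fin n)) : Prop :=
  Function.Injective v ∧ Function.Injective f ∧ (∀ i, f i ∈ E) ∧
    ∀ i : Fin k, v i ∈ f i ∧ v ⟨(i.val + 1) % k, Nat.mod_lt _ i.pos⟩ ∈ f i

/-!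
The extremal hypergraph consists of all `r`-sets containing a fixed `(r - 1)`-set `S`: the interior
vertices of a Berge path lie in two hyperedges, hence in `S`.

For the upper bound, let `n` be large. If some `(r - 1)`-set `S` lies in many hyperedges, then a
path that reaches `S` can be prolonged through all of `S`, which forces distinct hyperedges to meet
`S` and to be disjoint outside of it, so that there are at most `n - r + 1` of them. If there is a
Berge cycle on at least `r` vertices, then similarly the hyperedges not used by it are disjoint
outside of it, apart from a bounded number, and there are only about `n / 2` of them.

Otherwise every vertex set `U` contains at most `|U|` hyperedges. If there are more than `n - r + 1`
hyperedges, Hall's theorem therefore matches all vertices outside a set `B` of at most `r` vertices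
with distinct incident hyperedges `φ x`. Following arcs from `x` to the vertices of `φ x`, a longest
walk outside `B` closes up to a cycle through its last vertex `q`. The cycle contains `φ q \ B`, and
as it is short, `φ q` meets `B`. Pairwise disjoint such cycles are bounded in number in terms of
`|B|`, since many of them with the same `φ q ∩ B` yield a long path. Adding a maximal family of them
to `B` and iterating, each new cycle has an arc to the preceding layer, so paths grow with every
round. As paths have length at most `r`, boundedly many rounds exhaust all vertices, and `n` is
bounded.
-/

section Paths

open Finset

variable {α : Type*} [DecidableEq α] {v w z : α} {k : ℕ} {e : Finset α} {X X' : Finset α}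
  {F F' : Finset (Finset α)}

/-- `PathFrom v k X F`: there is a Berge path of length `k` starting at `v` all of whose vertices
lie in `X` and all of whose hyperedges lie in `F`. The sets `X` and `F` are only upper bounds; paths
grow at their first vertex. -/
inductive PathFrom : α → ℕ → Finset α → Finset (Finset α) → Prop
  | nil {v : α} {X : Finset α} {F : Finset (Finset α)} (hv : v ∈ X) : PathFrom v 0 X F
  | cons {v w : α} {k : ℕ} {e X : Finset α} {F : Finset (Finset α)} (hw : w ∈ X) (he : e ∈ F)
      (hve : v ∈ e) (hwe : w ∈ e) (h : PathFrom v k (X.erase w) (F.erase e)) :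
      PathFrom w (k + 1) X F

namespace PathFrom

theorem mono (h : PathFrom v k X F) (hX : X ⊆ X') (hF : F ⊆ F') : PathFrom v k X' F' := by
  induction h generalizing X' F' with
  | nil hv => exact .nil (hX hv)
  | cons hw he hve hwe _ ih =>
    exact .cons (hX hw) (hF he) hve hwe (ih (erase_subset_erase _ hX) (erase_subset_erase _ hF))

theorem of_le {j : ℕ} (h : PathFrom v k X F) (hj : j ≤ k) : PathFrom v j X F := by
  induction h generalizing j with
  | nil hv => obtain rfl := Nat.le_zero.mp hj; exact .nil hv
  | cons hw he hve hwe _ ih =>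
    cases j with
    | zero => exact .nil hw
    | succ j => exact .cons hw he hve hwe (ih (Nat.le_of_succ_le_succ hj))

theorem extend (h : PathFrom v k X F) (hw : w ∉ X) (he : e ∉ F) (hve : v ∈ e) (hwe : w ∈ e) :
    PathFrom w (k + 1) (insert w X) (insert e F) :=
  .cons (mem_insert_self _ _) (mem_insert_self _ _) hve hwe
    (by rwa [erase_insert hw, erase_insert he])

/-- The first path is grown along the second one. -/
theorem join {k' : ℕ} (h : PathFrom v k X F) (h' : PathFrom w k' X' F') (hX : Disjoint X X')
    (hF : Disjoint F F') (he : e ∉ F ∪ F') (hve : v ∈ e) (hwe : w ∈ e) :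
    ∃ z, PathFrom z (k + k' + 1) (X ∪ X') (insert e (F ∪ F')) := by
  induction h' generalizing v k X F e with
  | @nil w X' F' hw =>
    refine ⟨w, (h.extend (disjoint_right.mp hX hw) (notMem_union.mp he).1 hve hwe).mono ?_ ?_⟩ <;>
      grind
  | @cons _ w j e' X' F' hw he' hue' hwe' _ ih =>
    obtain ⟨z, hz⟩ := ih (e := e')
      (h.extend (disjoint_right.mp hX hw) (notMem_union.mp he).1 hve hwe)
      (by grind [disjoint_left]) (by grind [disjoint_left]) (by grind [disjoint_left]) hwe' hue'
    rw [show k + 1 + j + 1 = k + (j + 1) + 1 by ring] at hz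
    exact ⟨z, hz.mono (by grind) (by grind)⟩

theorem weave {G : Finset (Finset α)} {Y : Finset α} (h : PathFrom v k X F)
    (hG : ∀ e ∈ G, insert v Y ⊆ e) (hFG : Disjoint F G) (hXY : Disjoint X Y) (hYG : #Y ≤ #G) :
    ∃ t ∈ insert v Y, PathFrom t (k + #Y) (X ∪ Y) (F ∪ G) := by
  induction Y using Finset.induction_on generalizing v k X F G with
  | empty => exact ⟨v, by simp, by simpa using h.mono subset_rfl subset_union_left⟩
  | @insert y Y hy ih =>
    rw [card_insert_of_notMem hy] at hYG ⊢
    obtain ⟨e, he⟩ : G.Nonempty := card_pos.mp (by lia)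
    obtain ⟨t, ht, hp⟩ := ih (G := G.erase e)
      (h.extend (w := y) (by grind [disjoint_left]) (disjoint_right.mp hFG he)
        (hG e he (by simp)) (hG e he (by simp)))
      (fun f hf => (subset_insert _ _).trans (hG f (mem_of_mem_erase hf)))
      (by grind [disjoint_left]) (by grind [disjoint_left])
      (by rw [card_erase_of_mem he]; lia)
    rw [show k + 1 + #Y = k + (#Y + 1) by ring] at hp
    exact ⟨t, mem_insert_of_mem ht, hp.mono (by grind) (by grind)⟩

theorem exists_isBergePath {n : ℕ} {v : Fin n} {X : Finset (Fin n)} {F : Finset (Finset (Fin n))}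
    (h : PathFrom v k X F) : ∃ vs fs, IsBergePath F k vs fs ∧ vs 0 = v ∧ ∀ i, vs i ∈ X := by
  induction h with
  | @nil v X F hv =>
    exact ⟨fun _ => v, Fin.elim0, ⟨fun i j _ => Subsingleton.elim (α := Fin 1) i j,
      Function.injective_of_subsingleton _, fun i => i.elim0, fun i => i.elim0⟩, rfl, fun _ => hv⟩
  | @cons v w k e X F hw he hve hwe _ ih =>
    obtain ⟨vs, fs, ⟨hvs, hfs, hfF, hinc⟩, rfl, hvX⟩ := ih
    refine ⟨Fin.cons w vs, Fin.cons e fs, ⟨?_, ?_, ?_, ?_⟩, rfl, ?_⟩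
    · refine Fin.cons_injective_iff.mpr ⟨?_, hvs⟩
      rintro ⟨i, rfl⟩
      exact notMem_erase _ _ (hvX i)
    · refine Fin.cons_injective_iff.mpr ⟨?_, hfs⟩
      rintro ⟨i, rfl⟩
      exact notMem_erase _ _ (hfF i)
    · exact Fin.cases (by simpa using he) fun i => mem_of_mem_erase (hfF i)
    · refine Fin.cases (by simp [hve, hwe]) fun i => ?_
      simpa only [← Fin.succ_castSucc, Fin.cons_succ] using hinc i
    · exact Fin.cases (by simpa using hw) fun i => mem_of_mem_erase (hvX i)

end PathFrom

/-- No Berge path of `E` has length greater than `r`: the counterpart of `BPFree E (r + 1)` over an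
arbitrary vertex type. -/
def NoLongPath (E : Finset (Finset α)) (r : ℕ) : Prop :=
  ∀ ⦃v : α⦄ ⦃k : ℕ⦄ ⦃X : Finset α⦄ ⦃F : Finset (Finset α)⦄, F ⊆ E → PathFrom v k X F → k ≤ r

theorem BPFree.noLongPath {n r : ℕ} {E : Finset (Finset (Fin n))} (hE : BPFree E (r + 1)) :
    NoLongPath E r := by
  intro v k X F hF h
  by_contra! hk
  obtain ⟨vs, fs, hp, -⟩ := ((h.mono subset_rfl hF).of_le hk).exists_isBergePath
  exact hE ⟨vs, fs, hp⟩

end Paths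

section Connected

open Finset

variable {n : ℕ} {E : Finset (Finset (Fin n))}

theorem Connected.induction (hE : Connected E) {p : Fin n → Prop}
    (hp : ∀ e ∈ E, ∀ x ∈ e, ∀ y ∈ e, p x → p y) {x : Fin n} (hx : p x) (y : Fin n) : p y := by
  obtain ⟨k, v, f, ⟨-, -, hfE, hvf⟩, ⟨i, rfl⟩, ⟨j, rfl⟩⟩ := hE x y
  have hall (i : Fin (k + 1)) : p (v i) ↔ p (v 0) := by
    induction i using Fin.induction with
    | zero => rfl
    | succ i ih =>
      rw [← ih]
      exact ⟨hp _ (hfE i) _ (hvf i).2 _ (hvf i).1, hp _ (hfE i) _ (hvf i).1 _ (hvf i).2⟩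
  rwa [hall, ← hall i]

/-- A hypergraph is linked if every nonempty vertex set `U` whose neighbourhood is not left by any
hyperedge is met by all hyperedges. It is what connectedness is used for, over an arbitrary vertex
type. -/
def Linked {α : Type*} (E : Finset (Finset α)) : Prop :=
  ∀ ⦃U : Finset α⦄, U.Nonempty →
    (∀ f ∈ E, ∀ g ∈ E, ¬Disjoint f U → Disjoint g U → Disjoint f g) → ∀ e ∈ E, ¬Disjoint e U

theorem Connected.linked (hE : Connected E) (hne : ∀ e ∈ E, e.Nonempty) : Linked E := by
  rintro U ⟨u, hu⟩ hU e he
  obtain ⟨z, hz⟩ := hne e he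
  obtain hzU | ⟨f, hf, hfU, hzf⟩ : z ∈ U ∨ ∃ f ∈ E, ¬Disjoint f U ∧ z ∈ f := by
    refine hE.induction (p := fun z => z ∈ U ∨ ∃ f ∈ E, ¬Disjoint f U ∧ z ∈ f) ?_ (.inl hu) z
    rintro g hg x hx y hy (hxU | ⟨f, hf, hfU, hxf⟩)
    · exact .inr ⟨g, hg, not_disjoint_iff.mpr ⟨x, hx, hxU⟩, hy⟩
    · exact .inr ⟨g, hg, fun hgU => disjoint_left.mp (hU f hf g hg hfU hgU) hxf hx, hy⟩
  · exact not_disjoint_iff.mpr ⟨z, hz, hzU⟩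
  · exact fun heU => disjoint_left.mp (hU f hf e he hfU heU) hzf hz

end Connected

section Codegree

open Finset

variable {α : Type*} [DecidableEq α] {E : Finset (Finset α)} {S : Finset α}

/-- The number of hyperedges of `E` that contain `S`. -/
def codegree (E : Finset (Finset α)) (S : Finset α) : ℕ :=
  #{e ∈ E | S ⊆ e}

/-- A path that reaches `S` can visit all of `S` and one further vertex, provided that sufficiently
many hyperedges consist of `S` and one more vertex: at most `#F + #(X \ S)` of those are lost. -/
theorem PathFrom.exists_add_card {u : α} {k : ℕ} {X : Finset α} {F G : Finset (Finset α)}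
    (h : PathFrom u k X F) (hu : X ∩ S = {u}) (hSG : ∀ e ∈ G, S ⊆ e)
    (hG : (G : Set (Finset α)).Sized (#S + 1)) (hcard : #S + #F + #(X \ S) ≤ #G) :
    ∃ t X', PathFrom t (k + #S) X' (F ∪ G) := by
  have huS : u ∈ S := (mem_inter.mp (hu ▸ mem_singleton_self u)).2
  set H := G \ (F ∪ (X \ S).image (insert · S))
  have hHcard : #S ≤ #H := by
    have := le_card_sdiff (F ∪ (X \ S).image (insert · S)) G
    have := card_union_le F ((X \ S).image (insert · S))
    have := card_image_le (s := X \ S) (f := (insert · S))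
    lia
  have hSpos : 0 < #S := card_pos.mpr ⟨u, huS⟩
  obtain ⟨e, heH⟩ : H.Nonempty := card_pos.mp (by lia)
  obtain ⟨heG, heF⟩ := mem_sdiff.mp heH
  have heS : #e = #S + 1 := hG heG
  obtain ⟨w, hw, hwe⟩ : ∃ w, w ∉ S ∧ insert w S = e :=
    exists_eq_insert_iff.mpr ⟨hSG e heG, heS.symm⟩
  obtain ⟨t, ht, hp⟩ := h.weave (G := H.erase e) (Y := S.erase u)
    (fun f hf => by rw [insert_erase huS]; exact hSG f (by grind))
    (by grind [disjoint_left])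
    (by rw [disjoint_iff_inter_eq_empty, inter_erase, hu, erase_singleton])
    (by rw [card_erase_of_mem huS, card_erase_of_mem heH]; lia)
  rw [insert_erase huS] at ht
  have hwX : w ∉ X := fun hwX => heF (by grind)
  refine ⟨w, insert w (X ∪ S.erase u), ?_⟩
  rw [show k + #S = k + #(S.erase u) + 1 by rw [card_erase_of_mem huS]; lia]
  exact (hp.extend (by grind) (by grind) (hSG e heG ht) (by grind)).mono subset_rfl (by grind)

/-- A vertex outside `S` shared by two hyperedges yields a long path through `S`. -/
theorem NoLongPath.eq_of_mem_of_codegree (hE : NoLongPath E (#S + 1))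
    (hsized : (E : Set (Finset α)).Sized (#S + 1)) (hS : #S + 4 ≤ codegree E S)
    {f g : Finset α} (hf : f ∈ E) (hg : g ∈ E) (hfg : f ≠ g) {x y : α}
    (hxf : x ∈ f) (hxg : x ∈ g) (hx : x ∉ S) (hfS : ¬Disjoint f S) (hyg : y ∈ g) (hy : y ∉ S) :
    y = x := by
  by_contra hyx
  obtain ⟨u, huf, huS⟩ := not_disjoint_iff.mp hfS
  have hp : PathFrom u 2 {u, x, y} {f, g} :=
    .extend (.extend (.nil (mem_singleton_self y)) (by grind) (notMem_empty g) hyg hxg)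
      (by grind) (by grind) hxf huf
  have hXS : #({u, x, y} \ S) ≤ 2 :=
    (card_le_card (show {u, x, y} \ S ⊆ {x, y} by grind)).trans card_le_two
  obtain ⟨t, X', ht⟩ := hp.exists_add_card (S := S) (G := {e ∈ E | S ⊆ e}) (by grind)
    (by grind) (hsized.mono (coe_subset.mpr (filter_subset _ _)))
    (by have := card_le_two (a := f) (b := g); rw [codegree] at hS; lia)
  have := hE (by grind) ht
  lia

theorem NoLongPath.disjoint_sdiff_of_codegree (hE : NoLongPath E (#S + 1))
    (hsized : (E : Set (Finset α)).Sized (#S + 1)) (hS : #S + 4 ≤ codegree E S)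
    {f g : Finset α} (hf : f ∈ E) (hg : g ∈ E) (hfg : f ≠ g) (hfS : ¬Disjoint f S)
    (hgS : ¬Disjoint g S) : Disjoint (f \ S) (g \ S) := by
  refine disjoint_left.mpr fun x hxf hxg => hfg ?_
  obtain ⟨hxf, hxS⟩ := mem_sdiff.mp hxf
  obtain ⟨hxg, -⟩ := mem_sdiff.mp hxg
  have eq_insert {e : Finset α} (he : e ∈ E) (h : ∀ y ∈ e, y ∉ S → y = x) : e = insert x S :=
    eq_of_subset_of_card_le (fun y hy => by grind)
      (by rw [card_insert_of_notMem hxS, hsized he])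
  rw [eq_insert hf fun y => hE.eq_of_mem_of_codegree hsized hS hg hf hfg.symm hxg hxf hxS hgS,
    eq_insert hg fun y => hE.eq_of_mem_of_codegree hsized hS hf hg hfg hxf hxg hxS hfS]

theorem NoLongPath.not_disjoint_of_codegree (hE : NoLongPath E (#S + 1))
    (hsized : (E : Set (Finset α)).Sized (#S + 1)) (hlink : Linked E) (hS : S.Nonempty)
    (hdeg : #S + 4 ≤ codegree E S) : ∀ e ∈ E, ¬Disjoint e S := by
  refine hlink hS fun f hf g hg hfS hgS => disjoint_left.mpr fun x hxf hxg => ?_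
  have hle : g ⊆ {x} := fun y hy => mem_singleton.mpr <|
    hE.eq_of_mem_of_codegree hsized hdeg hf hg (fun h => hfS (h ▸ hgS)) hxf hxg
      (disjoint_left.mp hgS hxg) hfS hy (disjoint_left.mp hgS hy)
  have := card_le_card hle
  rw [hsized hg, card_singleton] at this
  have := hS.card_pos
  lia

theorem NoLongPath.card_add_card_le_of_codegree [Fintype α] (hE : NoLongPath E (#S + 1))
    (hsized : (E : Set (Finset α)).Sized (#S + 1)) (hlink : Linked E) (hS : S.Nonempty)
    (hdeg : #S + 4 ≤ codegree E S) : #E + #S ≤ Fintype.card α := by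
  have hmeet := hE.not_disjoint_of_codegree hsized hlink hS hdeg
  have hle : #E ≤ #(E.biUnion (· \ S)) := by
    refine card_le_card_biUnion (fun f hf g hg hfg =>
      hE.disjoint_sdiff_of_codegree hsized hdeg hf hg hfg (hmeet f hf) (hmeet g hg)) fun f hf => ?_
    exact sdiff_nonempty_of_card_lt_card (by rw [hsized hf]; lia)
  have hsub : E.biUnion (· \ S) ⊆ Sᶜ := by simp [subset_iff]
  have := card_le_card hsub
  rw [card_compl] at this
  have := card_le_univ S
  lia

end Codegree

section Circuit

open Finset

variable {α : Type*} [DecidableEq α] {E : Finset (Finset α)} {φ : α → Finset α} {Z : Finset α}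
  {f : Finset α} {r : ℕ}

/-- The map `φ` assigns to the vertices in `s` distinct hyperedges of `E` containing them. -/
structure IsMatching (E : Finset (Finset α)) (φ : α → Finset α) (s : Set α) : Prop where
  map_mem : ∀ x ∈ s, φ x ∈ E
  self_mem : ∀ x ∈ s, x ∈ φ x
  injOn : s.InjOn φ

omit [DecidableEq α] in
theorem IsMatching.mono {s t : Set α} (h : IsMatching E φ t) (hst : s ⊆ t) : IsMatching E φ s :=
  ⟨fun x hx => h.map_mem x (hst hx), fun x hx => h.self_mem x (hst hx), h.injOn.mono hst⟩

theorem IsMatching.image_subset (h : IsMatching E φ Z) : Z.image φ ⊆ E :=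
  image_subset_iff.mpr h.map_mem

theorem IsMatching.disjoint_image {s : Set α} {X Y : Finset α} (h : IsMatching E φ s)
    (hX : (X : Set α) ⊆ s) (hY : (Y : Set α) ⊆ s) (hXY : Disjoint X Y) :
    Disjoint (X.image φ) (Y.image φ) := by
  rw [disjoint_left, forall_mem_image]
  intro x hx hxY
  obtain ⟨y, hy, hyx⟩ := mem_image.mp hxY
  exact disjoint_left.mp hXY hx (h.injOn (hY hy) (hX hx) hyx ▸ hy)

/-- The set `Z` is the vertex set of a directed cycle in the digraph with an arc from `x` to every
vertex of `φ x`. If `φ` is a matching on `Z`, this is a Berge cycle; unlike Berge cycles, circuits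
may have length one. -/
def IsCircuit (φ : α → Finset α) (Z : Finset α) : Prop :=
  ∃ l : List α, l.Nodup ∧ (l : Cycle α).Chain (fun x y => y ∈ φ x) ∧ l.toFinset = Z

theorem PathFrom.prepend {z : α} {k : ℕ} {X : Finset α} {F : Finset (Finset α)} {l : List α}
    (h : PathFrom z k X F) (hl : l.Nodup) (hc : (l ++ [z]).IsChain fun x y => y ∈ φ x)
    (hφ : IsMatching E φ l.toFinset) (hX : Disjoint l.toFinset X)
    (hF : Disjoint (l.toFinset.image φ) F) :
    PathFrom (l.headD z) (k + l.length) (l.toFinset ∪ X) (l.toFinset.image φ ∪ F) := by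
  induction l with
  | nil => simpa using h
  | cons a l ih =>
    obtain ⟨hal, hl⟩ := List.nodup_cons.mp hl
    rw [List.toFinset_cons] at hφ hX hF ⊢
    rw [image_insert] at hF ⊢
    have hp := ih hl hc.tail (hφ.mono (by simp)) (disjoint_of_subset_left (subset_insert _ _) hX)
      (disjoint_of_subset_left (subset_insert _ _) hF)
    have hhead : l.headD z ∈ φ a := by cases l <;> simp_all
    rw [insert_union, insert_union]
    have haX : a ∉ l.toFinset ∪ X :=
      notMem_union.mpr ⟨by simpa using hal, (disjoint_insert_left.mp hX).1⟩
    have haF : φ a ∉ l.toFinset.image φ ∪ F := by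
      refine notMem_union.mpr ⟨fun ha => ?_, (disjoint_insert_left.mp hF).1⟩
      obtain ⟨b, hb, hba⟩ := mem_image.mp ha
      obtain rfl := hφ.injOn (by simp_all) (by simp) hba
      exact hal (List.mem_toFinset.mp hb)
    exact hp.extend haX haF hhead (hφ.self_mem a (by simp))

theorem PathFrom.of_isChain {l : List α} {z : α} (hl : (l ++ [z]).Nodup)
    (hc : (l ++ [z]).IsChain fun x y => y ∈ φ x) (hφ : IsMatching E φ l.toFinset) :
    PathFrom (l.headD z) l.length (l ++ [z]).toFinset (l.toFinset.image φ) := by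
  obtain ⟨hl, -, hz⟩ := List.nodup_append.mp hl
  have hp := (PathFrom.nil (mem_singleton_self z) (F := ∅)).prepend hl hc hφ
    (by simpa using fun h => hz z h) (disjoint_empty_right _)
  simpa [List.toFinset_append] using hp

namespace IsCircuit

theorem exists_list {q : α} (hZ : IsCircuit φ Z) (hq : q ∈ Z) : ∃ l : List α, (l ++ [q]).Nodup ∧
    (q :: (l ++ [q])).IsChain (fun x y => y ∈ φ x) ∧ (l ++ [q]).toFinset = Z := by
  obtain ⟨l, hl, hc, rfl⟩ := hZ
  obtain ⟨s, t, rfl⟩ := List.append_of_mem (List.mem_toFinset.mp hq)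
  have hrot : (s ++ q :: t) ~r (t ++ s ++ [q]) := by
    rw [List.append_cons, List.append_assoc t]
    exact List.isRotated_append
  rw [Cycle.coe_eq_coe.mpr hrot, Cycle.chain_ne_nil _ (by simp), List.getLast_concat] at hc
  exact ⟨t ++ s, hrot.nodup_iff.mp hl, hc, (List.toFinset_eq_of_perm _ _ hrot.perm).symm⟩

theorem exists_pathFrom (hZ : IsCircuit φ Z) (hφ : IsMatching E φ Z) (hf : ¬Disjoint f Z) :
    ∃ u ∈ f, PathFrom u (#Z - 1) Z ((Z.image φ).erase f) := by
  have main {l : List α} {q : α} (hnd : (l ++ [q]).Nodup)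
      (hc : (l ++ [q]).IsChain fun x y => y ∈ φ x) (hlZ : (l ++ [q]).toFinset = Z)
      (hl : ∀ x ∈ l, φ x ≠ f) : PathFrom (l.headD q) (#Z - 1) Z ((Z.image φ).erase f) := by
    have hsub : l.toFinset ⊆ Z := by simp [← hlZ]
    have hcard : #Z = l.length + 1 := by rw [← hlZ, List.toFinset_card_of_nodup hnd]; simp
    rw [hcard, Nat.add_sub_cancel]
    refine (PathFrom.of_isChain hnd hc (hφ.mono (coe_subset.mpr hsub))).mono hlZ.le ?_
    exact subset_erase.mpr ⟨image_subset_image hsub, by simpa using hl⟩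
  by_cases hfZ : f ∈ Z.image φ
  · obtain ⟨q, hq, rfl⟩ := mem_image.mp hfZ
    obtain ⟨l, hnd, hc, hlZ⟩ := hZ.exists_list hq
    refine ⟨l.headD q, by cases l <;> simp_all, main hnd hc.tail hlZ fun x hx hxq => ?_⟩
    obtain rfl := hφ.injOn (by simp [← hlZ, hx]) hq hxq
    exact (List.nodup_append.mp hnd).2.2 x hx x (by simp) rfl
  · obtain ⟨u, huf, hu⟩ := not_disjoint_iff.mp hf
    obtain ⟨l, hnd, hc, hlZ⟩ := hZ.exists_list hu
    obtain ⟨m, q, hmq⟩ : ∃ m q, u :: l = m ++ [q] :=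
      ⟨_, _, (List.dropLast_append_getLast (List.cons_ne_nil u l)).symm⟩
    have hhead : m.headD q = u := by cases m <;> simp_all
    have hc' : (m ++ [q]).IsChain fun x y => y ∈ φ x := by
      rw [← List.cons_append, hmq] at hc
      exact hc.left_of_append
    have hnd' : (m ++ [q]).Nodup := hmq ▸ (List.perm_append_singleton u l).nodup_iff.mp hnd
    have hmZ : (m ++ [q]).toFinset = Z := by
      rw [← hlZ, ← hmq]
      exact List.toFinset_eq_of_perm _ _ (List.perm_append_singleton u l).symm
    exact ⟨u, huf, hhead ▸ main hnd' hc' hmZ fun x hx hxf =>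
      hfZ (mem_image.mpr ⟨x, by simp [← hmZ, hx], hxf⟩)⟩

theorem exists_pathFrom_prepend {v q z : α} {k : ℕ} {X : Finset α} {F : Finset (Finset α)}
    (hZ : IsCircuit φ Z) (hφ : IsMatching E φ Z) (hv : v ∈ Z) (hq : q ∈ Z) (hz : z ∈ φ q)
    (h : PathFrom z k X F) (hX : Disjoint Z X) (hF : Disjoint (Z.image φ) F) :
    ∃ k' > k, PathFrom v k' (Z ∪ X) (Z.image φ ∪ F) := by
  obtain ⟨l, hnd, hc, rfl⟩ := hZ.exists_list hq
  have hcz : (l ++ [q] ++ [z]).IsChain fun x y => y ∈ φ x :=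
    List.isChain_append.mpr ⟨hc.tail, List.isChain_singleton z, by simp [hz]⟩
  obtain ⟨s, t, hst⟩ := List.append_of_mem (List.mem_toFinset.mp hv)
  rw [hst] at hnd hcz hφ hX hF ⊢
  have hsub : (v :: t).toFinset ⊆ (s ++ v :: t).toFinset := by simp [List.toFinset_append]
  have hsub' := image_subset_image (f := φ) hsub
  have hp := h.prepend hnd.of_append_right (hcz.suffix ⟨s, by simp⟩)
    (hφ.mono (coe_subset.mpr hsub)) (disjoint_of_subset_left hsub hX)
    (disjoint_of_subset_left hsub' hF)
  exact ⟨_, by simp, hp.mono (union_subset_union_left hsub) (union_subset_union_left hsub')⟩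

end IsCircuit

theorem NoLongPath.card_circuit_le (hE : NoLongPath E r) (hZ : IsCircuit φ Z)
    (hφ : IsMatching E φ Z) : #Z ≤ r + 1 := by
  obtain rfl | hne := Z.eq_empty_or_nonempty
  · simp
  obtain ⟨u, -, hp⟩ := hZ.exists_pathFrom hφ (f := Z) (by rwa [disjoint_self, bot_eq_empty, ← ne_eq,
    ← nonempty_iff_ne_empty])
  have := hE ((erase_subset _ _).trans hφ.image_subset) hp
  lia

end Circuit

section LongCircuit

open Finset

variable {α : Type*} [DecidableEq α] {E : Finset (Finset α)} {φ : α → Finset α} {Z : Finset α}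
  {r R : ℕ}

theorem NoLongPath.eq_of_mem_of_circuit (hE : NoLongPath E r) (hZ : IsCircuit φ Z)
    (hφ : IsMatching E φ Z) (hrZ : r ≤ #Z) {f g : Finset α} (hf : f ∈ E) (hg : g ∈ E)
    (hgZ : g ∉ Z.image φ) (hfg : f ≠ g) {x y : α} (hxf : x ∈ f) (hxg : x ∈ g) (hx : x ∉ Z)
    (hfZ : ¬Disjoint f Z) (hyg : y ∈ g) (hy : y ∉ Z) : y = x := by
  by_contra hyx
  obtain ⟨u, huf, hp⟩ := hZ.exists_pathFrom hφ hfZ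
  have hp' := (hp.extend hx (notMem_erase f _) huf hxf).extend (w := y) (e := g)
    (by grind) (by grind) hxg hyg
  have := hE (by grind [hφ.image_subset]) hp'
  lia

theorem NoLongPath.not_disjoint_of_circuit (hE : NoLongPath E r)
    (hsized : (E : Set (Finset α)).Sized r) (hlink : Linked E) (hr : 2 ≤ r) (hZ : IsCircuit φ Z)
    (hφ : IsMatching E φ Z) (hrZ : r ≤ #Z) : ∀ e ∈ E, ¬Disjoint e Z := by
  refine hlink (card_pos.mp (by lia)) fun f hf g hg hfZ hgZ => disjoint_left.mpr fun x hxf hxg => ?_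
  have hgφ : g ∉ Z.image φ := fun h => by
    obtain ⟨q, hq, rfl⟩ := mem_image.mp h
    exact disjoint_left.mp hgZ (hφ.self_mem q hq) hq
  obtain ⟨y, hyg, hyx⟩ := exists_mem_ne (by rw [hsized hg]; lia) x
  exact hyx <| hE.eq_of_mem_of_circuit hZ hφ hrZ hf hg hgφ (fun h => hfZ (h ▸ hgZ)) hxf hxg
    (disjoint_left.mp hgZ hxg) hfZ hyg (disjoint_left.mp hgZ hyg)

/-- Hyperedges with at least two vertices outside `Z` that are not used by the circuit are disjoint
outside `Z`, so there are at most half as many of them as vertices. -/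
theorem NoLongPath.two_mul_card_le_of_circuit [Fintype α] (hE : NoLongPath E r)
    (hsized : (E : Set (Finset α)).Sized r) (hlink : Linked E) (hr : 2 ≤ r) (hZ : IsCircuit φ Z)
    (hφ : IsMatching E φ Z) (hrZ : r ≤ #Z) :
    2 * #{f ∈ E | f ∉ Z.image φ ∧ 2 ≤ #(f \ Z)} ≤ Fintype.card α := by
  set E' := {f ∈ E | f ∉ Z.image φ ∧ 2 ≤ #(f \ Z)}
  have hmeet := hE.not_disjoint_of_circuit hsized hlink hr hZ hφ hrZ
  have hdisj : (E' : Set (Finset α)).PairwiseDisjoint (· \ Z) := by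
    intro f hf g hg hfg
    obtain ⟨hfE, -⟩ := mem_filter.mp hf
    obtain ⟨hgE, hgφ, hg2⟩ := mem_filter.mp hg
    refine disjoint_left.mpr fun x hxf hxg => ?_
    obtain ⟨hxf, hxZ⟩ := mem_sdiff.mp hxf
    obtain ⟨y, hy, hyx⟩ := exists_mem_ne hg2 x
    exact hyx <| hE.eq_of_mem_of_circuit hZ hφ hrZ hfE hgE hgφ hfg hxf (mem_sdiff.mp hxg).1 hxZ
      (hmeet f hfE) (mem_sdiff.mp hy).1 (mem_sdiff.mp hy).2
  calc 2 * #E' = #E' • 2 := by rw [smul_eq_mul, mul_comm]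
    _ ≤ ∑ f ∈ E', #(f \ Z) := card_nsmul_le_sum _ _ _ fun f hf => (mem_filter.mp hf).2.2
    _ = #(E'.biUnion (· \ Z)) := (card_biUnion hdisj).symm
    _ ≤ Fintype.card α := card_le_univ _

theorem card_filter_card_sdiff_le_one_le (hsized : (E : Set (Finset α)).Sized r) (hr : 0 < r)
    (hR : ∀ S, #S + 1 = r → codegree E S ≤ R) (U : Finset α) :
    #{f ∈ E | #(f \ U) ≤ 1} ≤ R * 2 ^ #U := by
  rw [← card_powerset]
  refine card_le_mul_card_image_of_maps_to (f := (· ∩ U))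
    (fun f _ => mem_powerset.mpr inter_subset_right) R fun A _ => ?_
  obtain hA | ⟨f, hf⟩ := ({g ∈ {f ∈ E | #(f \ U) ≤ 1} | g ∩ U = A}).eq_empty_or_nonempty
  · simp [hA]
  obtain ⟨⟨hfE, hfU⟩, rfl⟩ : (f ∈ E ∧ #(f \ U) ≤ 1) ∧ f ∩ U = A := by simpa using hf
  obtain ⟨S, hSA, hS⟩ := exists_subset_card_eq (s := f ∩ U) (n := r - 1) (by
    have := card_sdiff_add_card_inter f U
    rw [hsized hfE] at this
    lia)
  exact (card_le_card (by grind)).trans (hR S (by lia))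

theorem NoLongPath.two_mul_card_le [Fintype α] (hE : NoLongPath E r)
    (hsized : (E : Set (Finset α)).Sized r) (hlink : Linked E) (hr : 2 ≤ r)
    (hR : ∀ S, #S + 1 = r → codegree E S ≤ R) (hZ : IsCircuit φ Z) (hφ : IsMatching E φ Z)
    (hrZ : r ≤ #Z) : 2 * #E ≤ Fintype.card α + 2 * (r + 1 + R * 2 ^ (r + 1)) := by
  have hcard : #Z ≤ r + 1 := hE.card_circuit_le hZ hφ
  have hfew : #{f ∈ E | #(f \ Z) ≤ 1} ≤ R * 2 ^ (r + 1) :=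
    (card_filter_card_sdiff_le_one_le hsized (by lia) hR Z).trans (by gcongr; norm_num)
  have hmany := hE.two_mul_card_le_of_circuit hsized hlink hr hZ hφ hrZ
  have himage : #(Z.image φ) ≤ r + 1 := card_image_le.trans hcard
  set E₁ := {f ∈ E | #(f \ Z) ≤ 1}
  set E₂ := {f ∈ E | f ∉ Z.image φ ∧ 2 ≤ #(f \ Z)}
  have hcover : E ⊆ Z.image φ ∪ E₁ ∪ E₂ := fun f hf => by grind
  have := card_le_card hcover
  have := card_union_le (Z.image φ ∪ E₁) E₂
  have := card_union_le (Z.image φ) E₁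
  lia

end LongCircuit

section Hall

open Finset

variable {ι β α : Type*}

theorem exists_injOn_compl_of_card_le_card_biUnion_add [Finite ι] [Nonempty β] [DecidableEq β]
    {t : ι → Finset β} {d : ℕ} (h : ∀ s : Finset ι, #s ≤ #(s.biUnion t) + d) :
    ∃ (f : ι → β) (D : Finset ι), #D ≤ d ∧ Set.InjOn f (D : Set ι)ᶜ ∧ ∀ x ∉ D, f x ∈ t x := by
  cases nonempty_fintype ι
  -- `d` dummy elements are added to every `t x`; `D` consists of those `x` that receive one.
  have hall (s : Finset ι) : #s ≤ #(s.biUnion fun x => (t x).disjSum (univ : Finset (Fin d))) := by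
    obtain rfl | ⟨y, hy⟩ := s.eq_empty_or_nonempty
    · simp
    have hsum : s.biUnion (fun x => (t x).disjSum (univ : Finset (Fin d))) =
        (s.biUnion t).disjSum univ := by
      ext (b | i)
      · simp
      · simpa using ⟨y, hy⟩
    simpa [hsum] using h s
  obtain ⟨g, hg, hgt⟩ := (all_card_le_biUnion_card_iff_exists_injective _).mp hall
  refine ⟨fun x => (g x).elim id fun _ => Classical.arbitrary β, ({x | (g x).isRight} : Finset ι),
    ?_, fun x hx y hy hxy => ?_, fun x hx => ?_⟩
  · calc #{x | (g x).isRight} ≤ #((univ : Finset (Fin d)).map .inr) :=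
        card_le_card_of_injOn g (fun x hx => by
          obtain ⟨i, hi⟩ := Sum.isRight_iff.mp (mem_filter.mp hx).2
          simp [hi]) hg.injOn
      _ = d := by simp
  · obtain ⟨b, hb⟩ : ∃ b, g x = .inl b := Sum.isLeft_iff.mp (by simpa using hx)
    obtain ⟨c, hc⟩ : ∃ c, g y = .inl c := Sum.isLeft_iff.mp (by simpa using hy)
    exact hg (by simp_all)
  · obtain ⟨b, hb⟩ : ∃ b, g x = .inl b := Sum.isLeft_iff.mp (by simpa using hx)
    simpa [hb] using hgt x

theorem exists_isMatching_compl [Finite α] [DecidableEq α] {E : Finset (Finset α)} {d : ℕ}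
    (h : ∀ s : Finset α, #s ≤ #{e ∈ E | ¬Disjoint e s} + d) :
    ∃ (φ : α → Finset α) (D : Finset α), #D ≤ d ∧ IsMatching E φ (D : Set α)ᶜ := by
  have hbiUnion (s : Finset α) :
      s.biUnion (fun v => {e ∈ E | v ∈ e}) = {e ∈ E | ¬Disjoint e s} := by
    ext e
    simp only [mem_biUnion, mem_filter, not_disjoint_iff]
    tauto
  obtain ⟨φ, D, hD, hinj, hmem⟩ :=
    exists_injOn_compl_of_card_le_card_biUnion_add fun s => (h s).trans_eq (by rw [← hbiUnion s])
  exact ⟨φ, D, hD, fun x hx => (mem_filter.mp (hmem x hx)).1,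
    fun x hx => (mem_filter.mp (hmem x hx)).2, hinj⟩

end Hall

section Terminal

open Finset

variable {α : Type*} [DecidableEq α] {E : Finset (Finset α)} {φ : α → Finset α} {B Z : Finset α}
  {q : α} {r : ℕ}

/-- The circuit `Z` avoids `B`, and its vertex `q` has all out-neighbours in `Z` or `B`: a longest
walk outside `B` closes up to such a circuit when it gets stuck at `q`. -/
structure IsTerminal (φ : α → Finset α) (B : Finset α) (q : α) (Z : Finset α) : Prop where
  isCircuit : IsCircuit φ Z
  mem : q ∈ Z
  disjoint : Disjoint Z B
  sdiff_subset : φ q \ B ⊆ Z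

theorem exists_maximal_walk [Finite α] (φ : α → Finset α) {v : α} (hv : v ∉ B) :
    ∃ (l : List α) (q : α), (l ++ [q]).Nodup ∧ (l ++ [q]).IsChain (fun x y => y ∈ φ x) ∧
      Disjoint (l ++ [q]).toFinset B ∧ φ q \ B ⊆ (l ++ [q]).toFinset := by
  cases nonempty_fintype α
  let walks : Set (List α) :=
    {l | l.Nodup ∧ l.IsChain (fun x y => y ∈ φ x) ∧ Disjoint l.toFinset B}
  have hfin : walks.Finite :=
    (Set.toFinite (Set.range ((↑) : {l : List α // l.Nodup} → List α))).subset
      fun l hl => ⟨⟨l, hl.1⟩, rfl⟩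
  have hv' : [v] ∈ walks := ⟨by simp, by simp, by simpa using hv⟩
  obtain ⟨l, ⟨hnd, hc, hB⟩, hmax⟩ := hfin.exists_maximalFor List.length walks ⟨[v], hv'⟩
  obtain rfl | ⟨l, q, rfl⟩ := l.eq_nil_or_concat
  · simpa using hmax hv'
  rw [List.concat_eq_append] at *
  refine ⟨l, q, hnd, hc, hB, fun x hx => ?_⟩
  obtain ⟨hxq, hxB⟩ := mem_sdiff.mp hx
  by_contra hxl
  rw [List.mem_toFinset] at hxl
  have hx' : l ++ [q] ++ [x] ∈ walks := by
    refine ⟨?_, List.isChain_append.mpr ⟨hc, by simp, by simpa using hxq⟩, ?_⟩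
    · exact hnd.append (List.nodup_singleton x) (List.disjoint_singleton.mpr hxl)
    · rw [List.toFinset_append, disjoint_union_left]
      exact ⟨hB, by simpa using hxB⟩
  simpa using hmax hx'

theorem exists_isTerminal [Finite α] (hφ : ∀ v ∉ B, v ∈ φ v) {v : α} (hv : v ∉ B) :
    ∃ q Z, IsTerminal φ B q Z := by
  obtain ⟨l, q, hnd, hc, hB, hq⟩ := exists_maximal_walk φ hv
  have hqq : q ∈ φ q := hφ q (disjoint_left.mp hB (by simp))
  -- The circuit is closed up at the first vertex of the walk that lies in `φ q`.
  obtain ⟨a, ha⟩ := Option.isSome_iff_exists.mp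
    (List.find?_isSome.mpr ⟨q, List.mem_append_right l (by simp), by simpa using hqq⟩ :
      ((l ++ [q]).find? (· ∈ φ q)).isSome)
  obtain ⟨haq, s, m, hsm, hs⟩ := List.find?_eq_some_iff_append.mp ha
  simp only [decide_eq_true_eq, Bool.not_eq_true', decide_eq_false_iff_not] at haq hs
  have hlast : (a :: m).getLast (by simp) = q :=
    (List.getLast_eq_iff_getLast?_eq_some _).mpr (by simpa using (congrArg (·.getLast?) hsm).symm)
  have hsub : (a :: m).toFinset ⊆ (l ++ [q]).toFinset := by simp [hsm, List.toFinset_append]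
  refine ⟨q, (a :: m).toFinset, ⟨a :: m, ?_, ?_, rfl⟩, ?_, disjoint_of_subset_left hsub hB, ?_⟩
  · exact (hsm ▸ hnd).of_append_right
  · rw [Cycle.chain_ne_nil _ (by simp), hlast]
    exact .cons_cons haq (hsm ▸ hc).right_of_append
  · exact List.mem_toFinset.mpr (hlast ▸ List.getLast_mem _)
  · intro x hx
    have := hq hx
    rw [hsm, List.mem_toFinset, List.mem_append] at this
    exact List.mem_toFinset.mpr (this.resolve_left fun h => hs x h (mem_sdiff.mp hx).1)

namespace IsTerminal

theorem isMatching (hT : IsTerminal φ B q Z) (hφ : IsMatching E φ (B : Set α)ᶜ) :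
    IsMatching E φ Z :=
  hφ.mono (Set.subset_compl_iff_disjoint_right.mpr (disjoint_coe.mpr hT.disjoint))

theorem notMem (hT : IsTerminal φ B q Z) : q ∉ B :=
  disjoint_left.mp hT.disjoint hT.mem

theorem le_card_add_card (hT : IsTerminal φ B q Z) (hφ : IsMatching E φ (B : Set α)ᶜ)
    (hsized : (E : Set (Finset α)).Sized r) : r ≤ #(φ q ∩ B) + #Z := by
  have hle := card_le_card hT.sdiff_subset
  have hcard := card_sdiff_add_card_inter (φ q) B
  rw [hsized (hφ.map_mem q hT.notMem)] at hcard
  lia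

end IsTerminal

/-- Every Berge cycle of `E` has fewer than `r` vertices. -/
def NoLongCycle (E : Finset (Finset α)) (r : ℕ) : Prop :=
  ∀ ⦃φ : α → Finset α⦄ ⦃Z : Finset α⦄, IsCircuit φ Z → IsMatching E φ Z → #Z < r

namespace NoLongCycle

theorem pos (hE : NoLongCycle E r) : 0 < r :=
  hE (φ := fun _ => ∅) (Z := ∅) ⟨[], by simp⟩ ⟨by simp, by simp, by simp⟩

theorem inter_nonempty (hE : NoLongCycle E r) (hsized : (E : Set (Finset α)).Sized r)
    (hφ : IsMatching E φ (B : Set α)ᶜ) (hT : IsTerminal φ B q Z) : (φ q ∩ B).Nonempty := by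
  have := hE hT.isCircuit (hT.isMatching hφ)
  have := hT.le_card_add_card hφ hsized
  exact card_pos.mp (by lia)

/-- In a minimal counterexample `U`, Hall's theorem matches all of `U` into the hyperedges inside
`U`, and a longest walk closes up to a circuit with `r` vertices. -/
theorem card_filter_subset_le [Finite α] (hE : NoLongCycle E r)
    (hsized : (E : Set (Finset α)).Sized r) (U : Finset α) : #{e ∈ E | e ⊆ U} ≤ #U := by
  cases nonempty_fintype α
  induction U using Finset.strongInduction with | H U ih =>
  by_contra! hU
  have hhall (s : Finset α) : #s ≤ #{e ∈ {e ∈ E | e ⊆ U} | ¬Disjoint e s} + #Uᶜ := by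
    have hs : #(s \ U) ≤ #Uᶜ := card_le_card fun x hx => mem_compl.mpr (mem_sdiff.mp hx).2
    have hsU := card_sdiff_add_card_inter s U
    obtain hempty | hne := (s ∩ U).eq_empty_or_nonempty
    · rw [hempty, card_empty] at hsU
      lia
    have hih := ih (U \ s) (sdiff_lt_left.mpr (not_disjoint_iff_nonempty_inter.mpr hne))
    have hUs := card_sdiff_add_card_inter U s
    have hsplit := card_filter_add_card_filter_not (s := {e ∈ E | e ⊆ U}) (¬Disjoint · s)
    have hdisj : {e ∈ {e ∈ E | e ⊆ U} | ¬¬Disjoint e s} = {e ∈ E | e ⊆ U \ s} := by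
      simp only [filter_filter, not_not, subset_sdiff]
    rw [hdisj] at hsplit
    rw [inter_comm] at hUs
    lia
  obtain ⟨φ, D, hD, hφ⟩ := exists_isMatching_compl hhall
  have hφU : ∀ x ∉ D, φ x ⊆ U := fun x hx => (mem_filter.mp (hφ.map_mem x hx)).2
  obtain rfl : Uᶜ = D := eq_of_subset_of_card_le
    (fun x hx => by_contra fun h => mem_compl.mp hx (hφU x h (hφ.self_mem x h))) hD
  have hφE : IsMatching E φ ((Uᶜ : Finset α) : Set α)ᶜ :=
    ⟨fun x hx => (mem_filter.mp (hφ.map_mem x hx)).1, hφ.self_mem, hφ.injOn⟩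
  obtain ⟨v, hv⟩ : U.Nonempty := by
    obtain ⟨e, he⟩ := card_pos.mp (hU.trans_le' (Nat.zero_le _))
    obtain ⟨heE, heU⟩ := mem_filter.mp he
    exact (card_pos.mp (hsized heE ▸ hE.pos)).mono heU
  obtain ⟨q, Z, hT⟩ := exists_isTerminal hφ.self_mem (v := v) (by simpa using hv)
  obtain ⟨x, hx⟩ := hE.inter_nonempty hsized hφE hT
  obtain ⟨hxq, hxU⟩ := mem_inter.mp hx
  exact mem_compl.mp hxU (hφU q hT.notMem hxq)

end NoLongCycle

end Terminal

section TerminalFamily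

open Finset

variable {α : Type*} [DecidableEq α] {E : Finset (Finset α)} {φ : α → Finset α}
  {B Y : Finset α} {T : Finset (α × Finset α)} {r R : ℕ}

/-- The path runs through `Z₁`, then alternates between `Y` and `G`, then runs through `Z₂`. -/
theorem NoLongPath.card_add_card_add_card_le {Z₁ Z₂ : Finset α} {q₁ q₂ : α} {G : Finset (Finset α)}
    (hE : NoLongPath E r) (hZ₁ : IsCircuit φ Z₁) (hZ₂ : IsCircuit φ Z₂)
    (hφ : IsMatching E φ (Z₁ ∪ Z₂ : Finset α)) (hZ : Disjoint Z₁ Z₂) (hq₁ : q₁ ∈ Z₁)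
    (hq₂ : q₂ ∈ Z₂) (hY : Y.Nonempty) (hY₁ : Y ⊆ φ q₁) (hY₂ : Y ⊆ φ q₂)
    (hYZ : Disjoint (Z₁ ∪ Z₂) Y) (hGE : G ⊆ E) (hYG : ∀ e ∈ G, Y ⊆ e)
    (hG : Disjoint ((Z₁ ∪ Z₂).image φ) G) (hcard : #Y ≤ #G + 1) : #Z₁ + #Y + #Z₂ ≤ r + 1 := by
  have hφ₁ : IsMatching E φ Z₁ := hφ.mono (by simp)
  have hφ₂ : IsMatching E φ Z₂ := hφ.mono (by simp)
  have himage := hφ.disjoint_image (by simp) (by simp) hZ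
  rw [disjoint_union_left] at hYZ
  rw [image_union, disjoint_union_left] at hG
  have hmem₁ := mem_image_of_mem φ hq₁
  have hmem₂ := mem_image_of_mem φ hq₂
  obtain ⟨u₁, hu₁, hp₁⟩ := hZ₁.exists_pathFrom hφ₁
    (not_disjoint_iff.mpr ⟨q₁, hφ₁.self_mem q₁ hq₁, hq₁⟩)
  obtain ⟨u₂, hu₂, hp₂⟩ := hZ₂.exists_pathFrom hφ₂
    (not_disjoint_iff.mpr ⟨q₂, hφ₂.self_mem q₂ hq₂, hq₂⟩)
  obtain ⟨s, hs⟩ := hY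
  have hp := hp₁.extend (disjoint_right.mp hYZ.1 hs) (notMem_erase _ _) hu₁ (hY₁ hs)
  rw [insert_erase hmem₁] at hp
  obtain ⟨t, ht, hp⟩ := hp.weave (Y := Y.erase s) (by rwa [insert_erase hs]) hG.1
    (by grind [disjoint_left]) (by rw [card_erase_of_mem hs]; lia)
  rw [insert_erase hs] at ht
  obtain ⟨z, hp⟩ := hp.join hp₂ (e := φ q₂) (by grind [disjoint_left]) (by grind [disjoint_left])
    (by grind [disjoint_left]) (hY₂ ht) hu₂
  have hF : insert (φ q₂) (Z₁.image φ ∪ G ∪ (Z₂.image φ).erase (φ q₂)) ⊆ E := by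
    grind [hφ₁.image_subset, hφ₂.image_subset]
  have := hE hF hp
  have := card_pos.mpr ⟨q₁, hq₁⟩
  have := card_pos.mpr ⟨q₂, hq₂⟩
  have := card_pos.mpr ⟨s, hs⟩
  rw [card_erase_of_mem hs] at *
  lia

/-- A family of pairwise disjoint terminal circuits, each given with its terminal vertex. -/
structure IsTerminalFamily (φ : α → Finset α) (B : Finset α) (T : Finset (α × Finset α)) :
    Prop where
  isTerminal : ∀ p ∈ T, IsTerminal φ B p.1 p.2
  pairwiseDisjoint : (T : Set (α × Finset α)).PairwiseDisjoint Prod.snd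

namespace IsTerminalFamily

theorem subset {T' : Finset (α × Finset α)} (hT : IsTerminalFamily φ B T) (h : T' ⊆ T) :
    IsTerminalFamily φ B T' :=
  ⟨fun p hp => hT.isTerminal p (h hp), hT.pairwiseDisjoint.subset (coe_subset.mpr h)⟩

theorem eq_of_map_eq (hT : IsTerminalFamily φ B T) (hφ : IsMatching E φ (B : Set α)ᶜ)
    {p p' : α × Finset α} (hp : p ∈ T) (hp' : p' ∈ T) {x : α} (hx : x ∈ p'.2)
    (h : φ p.1 = φ x) : p = p' := by
  have hxB : x ∉ B := disjoint_left.mp (hT.isTerminal p' hp').disjoint hx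
  obtain rfl : p.1 = x := hφ.injOn (hT.isTerminal p hp).notMem hxB h
  exact hT.pairwiseDisjoint.elim_finset hp hp' _ (hT.isTerminal p hp).mem hx

theorem injOn (hT : IsTerminalFamily φ B T) (hφ : IsMatching E φ (B : Set α)ᶜ) :
    (T : Set (α × Finset α)).InjOn fun p => φ p.1 :=
  fun _ hp _ hp' h => hT.eq_of_map_eq hφ hp hp' (hT.isTerminal _ hp').mem h

theorem insert {q : α} {Z : Finset α} (hT : IsTerminalFamily φ B T) (hZ : IsTerminal φ B q Z)
    (hdisj : ∀ p ∈ T, Disjoint Z p.2) : IsTerminalFamily φ B (Insert.insert (q, Z) T) where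
  isTerminal := forall_mem_insert _ _ _ |>.mpr ⟨hZ, hT.isTerminal⟩
  pairwiseDisjoint := by
    rw [coe_insert]
    exact hT.pairwiseDisjoint.insert fun p hp _ => hdisj p hp

theorem disjoint_image {T' : Finset (α × Finset α)} {p : α × Finset α}
    (hT : IsTerminalFamily φ B T) (hφ : IsMatching E φ (B : Set α)ᶜ) (hp : p ∈ T) (hT' : T' ⊆ T)
    (hpT' : p ∉ T') : Disjoint (p.2.image φ) (T'.image fun p => φ p.1) := by
  rw [disjoint_left, forall_mem_image]
  intro x hx hxT
  obtain ⟨p', hp', h⟩ := mem_image.mp hxT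
  exact hpT' (hT.eq_of_map_eq hφ (hT' hp') hp hx h ▸ hp')

theorem card_le_of_inter_eq (hT : IsTerminalFamily φ B T) (hφ : IsMatching E φ (B : Set α)ᶜ)
    (hE : NoLongPath E r) (hsized : (E : Set (Finset α)).Sized r) (hY : Y.Nonempty)
    (hYr : #Y + 2 ≤ r) (hTY : ∀ p ∈ T, φ p.1 ∩ B = Y) : #T ≤ #Y := by
  by_contra! hlt
  obtain ⟨p₁, hp₁, p₂, hp₂, hne⟩ := one_lt_card.mp (show 1 < #T by have := card_pos.mpr hY; lia)
  have hT₁ := hT.isTerminal p₁ hp₁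
  have hT₂ := hT.isTerminal p₂ hp₂
  have hYφ : ∀ p ∈ T, Y ⊆ φ p.1 := fun p hp => hTY p hp ▸ inter_subset_left
  have hYB : Y ⊆ B := hTY p₁ hp₁ ▸ inter_subset_right
  have hZB : Disjoint (p₁.2 ∪ p₂.2) B := disjoint_union_left.mpr ⟨hT₁.disjoint, hT₂.disjoint⟩
  set T' := (T.erase p₁).erase p₂
  have hT' : T' ⊆ T := (erase_subset _ _).trans (erase_subset _ _)
  have hcard : #(T'.image fun p => φ p.1) = #T - 2 := by
    rw [card_image_of_injOn ((hT.subset hT').injOn hφ),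
      card_erase_of_mem (mem_erase.mpr ⟨hne.symm, hp₂⟩), card_erase_of_mem hp₁]
    lia
  have hlen := hE.card_add_card_add_card_le (G := T'.image fun p => φ p.1) hT₁.isCircuit
    hT₂.isCircuit (hφ.mono (Set.subset_compl_iff_disjoint_right.mpr (disjoint_coe.mpr hZB)))
    (hT.pairwiseDisjoint hp₁ hp₂ hne) hT₁.mem hT₂.mem hY (hYφ p₁ hp₁) (hYφ p₂ hp₂)
    (hZB.mono_right hYB)
    (image_subset_iff.mpr fun p hp => hφ.map_mem _ (hT.isTerminal p (hT' hp)).notMem)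
    (forall_mem_image.mpr fun p hp => hYφ p (hT' hp))
    (by
      rw [image_union, disjoint_union_left]
      exact ⟨hT.disjoint_image hφ hp₁ hT' (by simp [T']),
        hT.disjoint_image hφ hp₂ hT' (by simp [T'])⟩)
    (by lia)
  have hr₁ := hT₁.le_card_add_card hφ hsized
  have hr₂ := hT₂.le_card_add_card hφ hsized
  rw [hTY p₁ hp₁] at hr₁
  rw [hTY p₂ hp₂] at hr₂
  lia

theorem card_le_codegree (hT : IsTerminalFamily φ B T) (hφ : IsMatching E φ (B : Set α)ᶜ)
    (hTY : ∀ p ∈ T, Y ⊆ φ p.1) : #T ≤ codegree E Y :=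
  card_le_card_of_injOn (fun p => φ p.1)
    (fun p hp => mem_coe.mpr <| mem_filter.mpr
      ⟨hφ.map_mem _ (hT.isTerminal p hp).notMem, hTY p hp⟩)
    (hT.injOn hφ)

theorem card_le (hT : IsTerminalFamily φ B T) (hφ : IsMatching E φ (B : Set α)ᶜ)
    (hE : NoLongPath E r) (hE' : NoLongCycle E r) (hsized : (E : Set (Finset α)).Sized r)
    (hR : ∀ S, #S + 1 = r → codegree E S ≤ R) : #T ≤ (R + r) * 2 ^ #B := by
  rw [← card_powerset]
  refine card_le_mul_card_image_of_maps_to (f := fun p => φ p.1 ∩ B)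
    (fun p _ => mem_powerset.mpr inter_subset_right) _ fun Y _ => ?_
  obtain hempty | ⟨p, hp⟩ := ({p ∈ T | φ p.1 ∩ B = Y}).eq_empty_or_nonempty
  · simp [hempty]
  have hT' := hT.subset (filter_subset (fun p => φ p.1 ∩ B = Y) T)
  have hTY : ∀ p ∈ {p ∈ T | φ p.1 ∩ B = Y}, φ p.1 ∩ B = Y := fun p hp => (mem_filter.mp hp).2
  have hp' := hT'.isTerminal p hp
  have hY : Y.Nonempty := hTY p hp ▸ hE'.inter_nonempty hsized hφ hp'
  have hYr : #Y < r := by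
    rw [← hTY p hp, ← hsized (hφ.map_mem _ hp'.notMem)]
    refine card_lt_card (inter_subset_left.ssubset_of_ne fun h => hp'.notMem ?_)
    exact inter_eq_left.mp h (hφ.self_mem _ hp'.notMem)
  obtain hYr | hYr : #Y + 2 ≤ r ∨ #Y + 1 = r := by lia
  · have := hT'.card_le_of_inter_eq hφ hE hsized hY hYr hTY
    lia
  · have := hT'.card_le_codegree hφ fun p hp => (hTY p hp).ge.trans inter_subset_left
    have := hR Y hYr
    lia

end IsTerminalFamily

end TerminalFamily

section Absorption

open Finset

variable {α : Type*} [DecidableEq α] {E : Finset (Finset α)} {φ : α → Finset α}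
  {B B' B'' D : Finset α} {r R t : ℕ}

/-- The set `B'` arises from `B` by adding a maximal family of pairwise disjoint terminal
circuits. -/
structure Absorbs (φ : α → Finset α) (B B' : Finset α) : Prop where
  subset : B ⊆ B'
  exists_isTerminal : ∀ v ∈ B', v ∉ B → ∃ q Z, IsTerminal φ B q Z ∧ v ∈ Z ∧ Z ⊆ B'
  not_disjoint : ∀ q Z, IsTerminal φ B q Z → ¬Disjoint Z B'

theorem exists_absorbs [Finite α] {c M : ℕ} (hc : ∀ q Z, IsTerminal φ B q Z → #Z ≤ c)
    (hM : ∀ T, IsTerminalFamily φ B T → #T ≤ M) : ∃ B', Absorbs φ B B' ∧ #B' ≤ #B + M * c := by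
  obtain ⟨T, hT⟩ := (Set.toFinite {T | IsTerminalFamily φ B T}).exists_maximal
    ⟨∅, ⟨by simp, by simp⟩⟩
  have hsub : ∀ p ∈ T, p.2 ⊆ B ∪ T.biUnion Prod.snd := fun p hp =>
    (subset_biUnion_of_mem Prod.snd hp).trans subset_union_right
  refine ⟨B ∪ T.biUnion Prod.snd,
    ⟨subset_union_left, fun v hv hvB => ?_, fun q Z hZ hdisj => ?_⟩, ?_⟩
  · obtain ⟨p, hp, hvp⟩ := mem_biUnion.mp ((mem_union.mp hv).resolve_left hvB)
    exact ⟨p.1, p.2, hT.prop.isTerminal p hp, hvp, hsub p hp⟩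
  · have hmem : (q, Z) ∈ T := hT.le_of_ge
      (hT.prop.insert hZ fun p hp => hdisj.mono_right (hsub p hp)) (subset_insert _ _)
      (mem_insert_self _ _)
    exact disjoint_left.mp hdisj hZ.mem (hsub _ hmem hZ.mem)
  · calc #(B ∪ T.biUnion Prod.snd) ≤ #B + #(T.biUnion Prod.snd) := card_union_le _ _
      _ ≤ #B + #T * c := by
        gcongr
        exact card_biUnion_le_card_mul _ _ _ fun p hp => hc _ _ (hT.prop.isTerminal p hp)
      _ ≤ #B + M * c := by gcongr; exact hM T hT.prop

/-- A terminal circuit of `B'` must have an arc into `B' \ B`, since otherwise it would be a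
terminal circuit of `B` that `B'` misses. -/
theorem Absorbs.exists_pathFrom (h : Absorbs φ B B') (h' : Absorbs φ B' B'') (hD : D ⊆ B')
    (hφ : IsMatching E φ (D : Set α)ᶜ)
    (hpath : ∀ v ∈ B', v ∉ B → ∃ k ≥ t, PathFrom v k B' ((B' \ D).image φ)) :
    ∀ v ∈ B'', v ∉ B' → ∃ k ≥ t + 1, PathFrom v k B'' ((B'' \ D).image φ) := by
  intro v hv hvB'
  obtain ⟨q, Z, hZ, hvZ, hZB''⟩ := h'.exists_isTerminal v hv hvB'
  obtain ⟨z, hzq, hzB', hzB⟩ : ∃ z ∈ φ q, z ∈ B' ∧ z ∉ B := by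
    by_contra! hB
    refine h.not_disjoint q Z ⟨hZ.isCircuit, hZ.mem, hZ.disjoint.mono_right h.subset, ?_⟩
      hZ.disjoint
    exact fun x hx => hZ.sdiff_subset (by grind)
  obtain ⟨k, htk, hk⟩ := hpath z hzB' hzB
  have hZD : Disjoint Z D := hZ.disjoint.mono_right hD
  have hsub : (Z : Set α) ⊆ (D : Set α)ᶜ :=
    Set.subset_compl_iff_disjoint_right.mpr (disjoint_coe.mpr hZD)
  obtain ⟨k', hkk', hk'⟩ := hZ.isCircuit.exists_pathFrom_prepend (hφ.mono hsub) hvZ hZ.mem hzq hk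
    hZ.disjoint (hφ.disjoint_image hsub (by simp)
      (hZ.disjoint.mono_right sdiff_subset))
  rw [← image_union] at hk'
  exact ⟨k', by lia, hk'.mono (union_subset hZB'' h'.subset)
    (image_subset_image (union_subset (subset_sdiff.mpr ⟨hZB'', hZD⟩)
      (sdiff_subset_sdiff h'.subset subset_rfl)))⟩

theorem exists_absorbs_pathFrom {g : ℕ → ℕ} (hg : Monotone g)
    (habs : ∀ B, D ⊆ B → ∃ B', Absorbs φ B B' ∧ #B' ≤ g #B)
    (hφ : IsMatching E φ (D : Set α)ᶜ) (t : ℕ) :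
    ∃ B B', D ⊆ B ∧ Absorbs φ B B' ∧ #B' ≤ g^[t + 1] #D ∧
      ∀ v ∈ B', v ∉ B → ∃ k ≥ t, PathFrom v k B' ((B' \ D).image φ) := by
  induction t with
  | zero =>
    obtain ⟨B', h, hcard⟩ := habs D subset_rfl
    exact ⟨D, B', subset_rfl, h, hcard, fun v hv _ => ⟨0, le_rfl, .nil hv⟩⟩
  | succ t ih =>
    obtain ⟨B, B', hDB, h, hcard, hpath⟩ := ih
    have hDB' := hDB.trans h.subset
    obtain ⟨B'', h', hcard'⟩ := habs B' hDB'
    refine ⟨B', B'', hDB', h', ?_, h.exists_pathFrom h' hDB' hφ hpath⟩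
    rw [Function.iterate_succ_apply']
    exact hcard'.trans (hg hcard)

/-- An upper bound for the size of a set that arises by absorption from a set of size `b`, where `r`
is the uniformity and `R` bounds the codegrees of sets of size `r - 1`. -/
def absorbBound (r R b : ℕ) : ℕ :=
  b + (R + r) * 2 ^ b * (r + 1)

theorem absorbBound_mono (r R : ℕ) : Monotone (absorbBound r R) := by
  intro a b hab
  unfold absorbBound
  gcongr
  norm_num

theorem NoLongPath.card_le_iterate_absorbBound [Fintype α] (hE : NoLongPath E r)
    (hE' : NoLongCycle E r) (hsized : (E : Set (Finset α)).Sized r)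
    (hR : ∀ S, #S + 1 = r → codegree E S ≤ R) (hφ : IsMatching E φ (D : Set α)ᶜ) :
    Fintype.card α ≤ (absorbBound r R)^[r + 2] #D := by
  have habs (B : Finset α) (hDB : D ⊆ B) : ∃ B', Absorbs φ B B' ∧ #B' ≤ absorbBound r R #B := by
    have hφB : IsMatching E φ (B : Set α)ᶜ :=
      hφ.mono (Set.compl_subset_compl.mpr (coe_subset.mpr hDB))
    exact exists_absorbs (fun q Z hZ => hE.card_circuit_le hZ.isCircuit (hZ.isMatching hφB))
      fun T hT => hT.card_le hφB hE hE' hsized hR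
  obtain ⟨B, B', hDB, h, hcard, hpath⟩ :=
    exists_absorbs_pathFrom (absorbBound_mono r R) habs hφ (r + 1)
  obtain rfl : B = B' := h.subset.antisymm fun v hv => by_contra fun hvB => by
    obtain ⟨k, hk, hp⟩ := hpath v hv hvB
    have := hE ((hφ.mono (by simp)).image_subset) hp
    lia
  suffices hB : B = univ by rwa [hB, card_univ] at hcard
  refine eq_univ_of_forall fun v => by_contra fun hv => ?_
  obtain ⟨q, Z, hZ⟩ := exists_isTerminal (fun x hx => hφ.self_mem x fun h => hx (hDB h)) hv
  exact h.not_disjoint q Z hZ hZ.disjoint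

end Absorption

section UpperBound

open Finset

variable {α : Type*} [DecidableEq α] [Fintype α] {E : Finset (Finset α)} {r : ℕ}

theorem NoLongCycle.exists_isMatching_compl {d : ℕ} (hE : NoLongCycle E r)
    (hsized : (E : Set (Finset α)).Sized r) (hd : Fintype.card α ≤ #E + d) :
    ∃ (φ : α → Finset α) (D : Finset α), #D ≤ d ∧ IsMatching E φ (D : Set α)ᶜ := by
  refine Berge.exists_isMatching_compl fun s => ?_
  have hsplit := card_filter_add_card_filter_not (s := E) (¬Disjoint · s)
  have hcompl : {e ∈ E | ¬¬Disjoint e s} = {e ∈ E | e ⊆ sᶜ} := by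
    simp only [not_not, subset_compl_iff_disjoint_right]
  have hle := hE.card_filter_subset_le hsized sᶜ
  have := card_add_card_compl s
  rw [hcompl] at hsplit
  lia

/-- A number of vertices above which the extremal number is `n - r + 1`: the first summand beats
the bounds obtained from a large codegree and from a long cycle, the second one the bound obtained
by absorption. -/
def threshold (r : ℕ) : ℕ :=
  2 * (r + 1 + (r + 2) * 2 ^ (r + 1)) + 2 * r + ((absorbBound r (r + 2))^[r + 2] r + 1)

theorem NoLongPath.card_add_le (hE : NoLongPath E r) (hsized : (E : Set (Finset α)).Sized r)
    (hlink : Linked E) (hr : 2 ≤ r) (hα : threshold r ≤ Fintype.card α) :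
    #E + r ≤ Fintype.card α + 1 := by
  by_contra! hlt
  unfold threshold at hα
  have hR (S : Finset α) (hS : #S + 1 = r) : codegree E S ≤ r + 2 := by
    by_contra! hdeg
    subst hS
    have := hE.card_add_card_le_of_codegree hsized hlink (card_pos.mp (by lia)) hdeg
    lia
  have hE' : NoLongCycle E r := fun φ Z hZ hφ => by
    by_contra! hrZ
    have := hE.two_mul_card_le hsized hlink hr hR hZ hφ hrZ
    lia
  obtain ⟨φ, D, hD, hφ⟩ := hE'.exists_isMatching_compl hsized (d := r) (by lia)
  have := hE.card_le_iterate_absorbBound hE' hsized hR hφ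
  have := (absorbBound_mono r (r + 2)).iterate (r + 2) hD
  lia

end UpperBound

section Construction

open Finset FinsetFamily

variable {n : ℕ} {E : Finset (Finset (Fin n))} {S : Finset (Fin n)}

theorem isBergePath_one {x y : Fin n} {e : Finset (Fin n)} (hxy : x ≠ y) (he : e ∈ E)
    (hx : x ∈ e) (hy : y ∈ e) : IsBergePath E 1 ![x, y] ![e] := by
  refine ⟨?_, Function.injective_of_subsingleton _, by simpa, by simp [hx, hy]⟩
  intro i j h
  fin_cases i <;> fin_cases j <;> simp_all

theorem isBergePath_two {x y z : Fin n} {e f : Finset (Fin n)} (hxy : x ≠ y) (hyz : y ≠ z)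
    (hxz : x ≠ z) (hef : e ≠ f) (he : e ∈ E) (hf : f ∈ E) (hx : x ∈ e) (hy : y ∈ e)
    (hy' : y ∈ f) (hz : z ∈ f) : IsBergePath E 2 ![x, y, z] ![e, f] := by
  refine ⟨?_, ?_, by simp [Fin.forall_fin_two, he, hf],
    by simp [Fin.forall_fin_two, hx, hy, hy', hz]⟩ <;>
  · intro i j h
    fin_cases i <;> fin_cases j <;> simp_all

theorem connected_of_forall_exists_mem {s : Fin n} (h : ∀ x, ∃ e ∈ E, s ∈ e ∧ x ∈ e) :
    Connected E := by
  intro x y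
  obtain rfl | hxy := eq_or_ne x y
  · exact ⟨0, ![x], ![], ⟨fun i j _ => Subsingleton.elim (α := Fin 1) i j, fun i => i.elim0,
      fun i => i.elim0, fun i => i.elim0⟩, ⟨0, rfl⟩, ⟨0, rfl⟩⟩
  obtain ⟨e, he, hse, hxe⟩ := h x
  obtain ⟨f, hf, hsf, hyf⟩ := h y
  by_cases hxf : x ∈ f
  · exact ⟨1, _, _, isBergePath_one hxy hf hxf hyf, ⟨0, rfl⟩, ⟨1, rfl⟩⟩
  by_cases hye : y ∈ e
  · exact ⟨1, _, _, isBergePath_one hxy he hxe hye, ⟨0, rfl⟩, ⟨1, rfl⟩⟩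
  exact ⟨2, _, _, isBergePath_two (ne_of_mem_of_not_mem hsf hxf).symm
    (ne_of_mem_of_not_mem hse hye) hxy (ne_of_mem_of_not_mem' hxe hxf) he hf hxe hse hsf hyf,
    ⟨0, rfl⟩, ⟨2, rfl⟩⟩

theorem card_upShadow_singleton {α : Type*} [DecidableEq α] [Fintype α] (S : Finset α) :
    #(∂⁺ {S}) = Fintype.card α - #S := by
  have hinj : ((Sᶜ : Finset α) : Set α).InjOn (insert · S) := fun x hx y _ hxy =>
    (mem_insert.mp (hxy.subset (mem_insert_self x S))).resolve_right (mem_compl.mp hx)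
  simp [upShadow, card_image_of_injOn hinj, card_compl]

theorem mem_of_mem_upShadow_singleton {α : Type*} [DecidableEq α] [Fintype α] {S e f : Finset α}
    (he : e ∈ ∂⁺ {S}) (hf : f ∈ ∂⁺ {S}) (hef : e ≠ f) {x : α} (hxe : x ∈ e) (hxf : x ∈ f) :
    x ∈ S := by
  simp only [mem_upShadow_iff, mem_singleton, exists_eq_left] at he hf
  obtain ⟨a, -, rfl⟩ := he
  obtain ⟨b, -, rfl⟩ := hf
  by_contra hx
  obtain rfl := (mem_insert.mp hxe).resolve_right hx
  obtain rfl := (mem_insert.mp hxf).resolve_right hx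
  exact hef rfl

theorem bpFree_upShadow_singleton (S : Finset (Fin n)) : BPFree (∂⁺ {S}) (#S + 2) := by
  rintro ⟨v, f, hv, hf, hfE, hvf⟩
  have hmem (i : Fin (#S + 1)) : v i.succ.castSucc ∈ S :=
    mem_of_mem_upShadow_singleton (hfE i.castSucc) (hfE i.succ)
      (hf.ne Fin.castSucc_lt_succ.ne) (hvf i.castSucc).2 (hvf i.succ).1
  have hle := card_le_card_of_injOn (s := univ) (fun i : Fin (#S + 1) => v i.succ.castSucc)
    (fun i _ => hmem i)
    (hv.comp ((Fin.castSucc_injective _).comp (Fin.succ_injective _))).injOn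
  rw [card_univ, Fintype.card_fin] at hle
  lia

theorem connected_upShadow_singleton (hS : S.Nonempty) (hSn : #S < n) : Connected (∂⁺ {S}) := by
  obtain ⟨s, hs⟩ := hS
  have hedge (w : Fin n) (hw : w ∉ S) : insert w S ∈ ∂⁺ {S} :=
    mem_upShadow_iff.mpr ⟨S, mem_singleton_self S, w, hw, rfl⟩
  refine connected_of_forall_exists_mem (s := s) fun x => ?_
  by_cases hx : x ∈ S
  · obtain ⟨w, hw⟩ : ∃ w, w ∉ S := by
      by_contra! h
      rw [eq_univ_of_forall h, card_univ, Fintype.card_fin] at hSn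
      exact hSn.false
    exact ⟨_, hedge w hw, mem_insert_of_mem hs, mem_insert_of_mem hx⟩
  · exact ⟨_, hedge x hx, mem_insert_of_mem hs, mem_insert_self x S⟩

theorem exists_connected_bpFree_card_eq {r : ℕ} (hr : 2 ≤ r) (hrn : r ≤ n) :
    ∃ E : Finset (Finset (Fin n)),
      Uniform E r ∧ Connected E ∧ BPFree E (r + 1) ∧ #E = n - r + 1 := by
  obtain ⟨S, -, hS⟩ := exists_subset_card_eq (s := (univ : Finset (Fin n))) (n := r - 1)
    (by rw [card_univ, Fintype.card_fin]; lia)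
  obtain rfl : r = #S + 1 := by lia
  refine ⟨∂⁺ {S}, ?_, connected_upShadow_singleton (card_pos.mp (by lia)) hrn,
    bpFree_upShadow_singleton S, ?_⟩
  · have hsized : (({S} : Finset (Finset (Fin n))) : Set (Finset (Fin n))).Sized #S := by
      simp [Set.Sized]
    exact fun e he => hsized.upShadow he
  · rw [card_upShadow_singleton, Fintype.card_fin]
    lia

end Construction

theorem stmt10_general (r : ℕ) (hr : 2 ≤ r) :
    ∃ N : ℕ, ∀ n : ℕ, N ≤ n → exConn n r (r + 1) = n - r + 1 := by
  refine ⟨threshold r, fun n hn => ?_⟩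
  have hrn : r ≤ n := hn.trans' (by unfold threshold; lia)
  refine IsGreatest.csSup_eq ⟨exists_connected_bpFree_card_eq hr hrn, ?_⟩
  rintro m ⟨E, hunif, hconn, hfree, rfl⟩
  have hlink : Linked E :=
    hconn.linked fun e he => Finset.card_pos.mp (by rw [hunif e he]; lia)
  have := hfree.noLongPath.card_add_le hunif hlink hr (by rwa [Fintype.card_fin])
  rw [Fintype.card_fin] at this
  lia

theorem stmt10 (r : ℕ) (hr : 3 ≤ r) :
    ∃ N : ℕ, ∀ n : ℕ, N ≤ n → exConn n r (r + 1) = n - r + 1 :=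
  stmt10_general r (by lia)

end Berge
end
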